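/- arXiv:1111.7207 — 2 statements merged into one kernel-verified Lean document; each statement's English description precedes it below -/
import Mathlib

section
/- Let n ≥ 1 and 0 < λ ≤ Λ. There exist constants c', c'' > 0 and c̄ ≥ 2, depending only on n, λ and Λ, such that for every normalized convex set U ⊂ ℝⁿ, every function u : closure(U) → ℝ which is continuous on closure(U), convex and C² in U, with u = 0 on ∂U and λ ≤ det D²u ≤ Λ in U, and every γ ≥ c̄, one has ∫_{(1/2)U ∩ {‖D²u‖ ≥ γ}} ‖D²u(x)‖ dx ≤ c' γ |{x ∈ (3/4)U : ‖D²u(x)‖ ≥ c'' γ}|. -/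
/-!
The proof is a covering argument with the sections `S(y, h)` of `u`: the sets where `u` lies below its tangent plane at
`y` raised by `h`.

*One section.* Suppose that `S = S(y, h)` contains the ball of radius `√(4h/γ)` around `y`, while some vector of length
at most `√(8h/γ)` leaves it. Let `M` be an affine frame of `S` at `y`, given by an inscribed simplex of maximal volume
(`exists_frame`). Integrating `D²u` along the edges of the frame bounds the integral over `S` of `tr (Mᵀ D²u M)` by
`C h` times the volume of the smaller concentric section `S' = S(y, c² h / 16)` (`Balanced.lintegral_edge_le`,
`Balanced.lintegral_frameTrace_le`). As `S` contains a ball of radius `√(4h/γ)`, one has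
`‖D²u‖ ≤ C (γ/h) tr (Mᵀ D²u M)`, so the integral of `‖D²u‖` over `S` is at most `C γ |S'|`. On at least half of `S'` the
trace is at most `C h`, by Chebyshev's inequality. At these points `det D²u ≥ λ` and `|det M|² ≥ c hⁿ` make the form
`Mᵀ D²u M` larger than a multiple of `h`, and evaluation at the short vector leaving `S` gives `‖D²u‖ ≥ κ γ`. Hence
`|S'| ≤ 2 |S' ∩ {‖D²u‖ ≥ κ γ}|` (`exists_local`).

*Choice of heights and covering.* At a point `y` with `‖D²u(y)‖ ≥ γ` such a height `h` exists: otherwise the sections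
`S(y, h₁ / 2ᵏ)` contain the balls of radius `√(8 h₁ / (2ᵏ γ))` for all `k`, which forces `‖D²u(y)‖ ≤ γ/2`
(`Balanced.exists_height`, `MADomain.norm_le_of_sec`). Small sections centred in `½U` lie in `¾U`
(`Balanced.sec_subset_smul`), and sections have the engulfing property (`Balanced.engulf`), so Vitali's covering lemma
selects countably many disjoint `S'` whose sections `S` cover `½U ∩ {‖D²u‖ ≥ γ}`. Summing up gives the estimate
(`exists_level_set`).

*Geometry of sections.* Everything used about sections follows from a balance property: a point of definite relative
depth in a sublevel domain can be moved by a fixed multiple of any difference vector of the domain (`exists_balance`).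
It is a consequence of Alexandrov's maximum principle (`MADomain.alexandrov`) and of the upper bound of the volume of a
domain by its depth (`MADomain.det_frame_le`), both obtained by comparing volumes under the gradient map. Applying
balance repeatedly along a ray shows that tangent planes at points of distance at least `1/4` from `∂U` stay below a
negative constant depending only on `n, λ, Λ` (`exists_strict`), so sections of height below a universal constant are
compactly contained in `U`.
-/

open MeasureTheory Metric Set
open scoped Pointwise

noncomputable def hessMatrix {n : ℕ} (u : EuclideanSpace ℝ (Fin n) → ℝ)
    (x : EuclideanSpace ℝ (Fin n)) : Matrix (Fin n) (Fin n) ℝ :=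
  fun i j => iteratedFDeriv ℝ 2 u x ![EuclideanSpace.single i (1 : ℝ), EuclideanSpace.single j 1]

noncomputable def hessNorm {n : ℕ} (u : EuclideanSpace ℝ (Fin n) → ℝ)
    (x : EuclideanSpace ℝ (Fin n)) : ℝ :=
  ‖Matrix.toEuclideanCLM (𝕜 := ℝ) (hessMatrix u x)‖

noncomputable def hessDet {n : ℕ} (u : EuclideanSpace ℝ (Fin n) → ℝ)
    (x : EuclideanSpace ℝ (Fin n)) : ℝ :=
  (hessMatrix u x).det

def IsNormalized {n : ℕ} (Z : Set (EuclideanSpace ℝ (Fin n))) : Prop :=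
  IsOpen Z ∧ Convex ℝ Z ∧ ball (0 : EuclideanSpace ℝ (Fin n)) 1 ⊆ Z ∧ Z ⊆ ball 0 n

/-! ### Symmetric operators and determinants -/

namespace MALevel

open scoped RealInnerProductSpace

/-- Euclidean space `ℝⁿ`. -/
abbrev Eucl (n : ℕ) := EuclideanSpace ℝ (Fin n)

variable {n : ℕ}

/-- Spectral decomposition of the quadratic form of a symmetric operator. -/
lemma exists_diag (A : Eucl n →L[ℝ] Eucl n) (hs : ∀ a b, ⟪A a, b⟫ = ⟪a, A b⟫) :
    ∃ (μ : Fin n → ℝ) (v : OrthonormalBasis (Fin n) ℝ (Eucl n)),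
      A.det = ∏ i, μ i ∧ (∑ i, ⟪A (EuclideanSpace.single i 1), EuclideanSpace.single i 1⟫) = ∑ i, μ i ∧
      (∀ i, A (v i) = μ i • v i) ∧ ∀ a, ⟪A a, a⟫ = ∑ i, μ i * ⟪v i, a⟫ ^ 2 := by
  have hA : (A : Eucl n →ₗ[ℝ] Eucl n).IsSymmetric := fun a b => hs a b
  have hn : Module.finrank ℝ (Eucl n) = n := by simp
  refine ⟨hA.eigenvalues hn, hA.eigenvectorBasis hn, ?_, ?_, ?_, ?_⟩
  · have := hA.det_eq_prod_eigenvalues hn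
    simpa using this
  · have h1 := hA.trace_eq_sum_eigenvalues hn
    have h2 := LinearMap.trace_eq_sum_inner (A : Eucl n →ₗ[ℝ] Eucl n) (EuclideanSpace.basisFun (Fin n) ℝ)
    rw [h2] at h1
    simp only [EuclideanSpace.basisFun_apply, ContinuousLinearMap.coe_coe] at h1
    refine Eq.trans ?_ h1
    exact Finset.sum_congr rfl fun i _ => real_inner_comm _ _
  · intro i
    exact hA.apply_eigenvectorBasis hn i
  · intro a
    rw [← (hA.eigenvectorBasis hn).sum_inner_mul_inner]
    refine Finset.sum_congr rfl fun i _ => ?_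
    rw [hs, show A (hA.eigenvectorBasis hn i) = _ from hA.apply_eigenvectorBasis hn i, inner_smul_right,
      real_inner_comm]
    simp; ring

/-- The trace, computed in the standard basis, dominates a nonnegative form. -/
lemma quad_le_trace (A : Eucl n →L[ℝ] Eucl n) (hs : ∀ a b, ⟪A a, b⟫ = ⟪a, A b⟫)
    (hp : ∀ a, 0 ≤ ⟪A a, a⟫) (a : Eucl n) :
    ⟪A a, a⟫ ≤ (∑ i, ⟪A (EuclideanSpace.single i 1), EuclideanSpace.single i 1⟫) * ‖a‖ ^ 2 := by
  obtain ⟨μ, v, -, h2, h3, h4⟩ := exists_diag A hs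
  have hμ : ∀ i, 0 ≤ μ i := fun i => by
    have := hp (v i)
    rwa [h3, inner_smul_left, real_inner_self_eq_norm_sq, v.norm_eq_one, one_pow, mul_one] at this
  rw [h2, h4, ← v.sum_sq_inner_right a, Finset.mul_sum]
  exact Finset.sum_le_sum fun i _ => mul_le_mul_of_nonneg_right
    (Finset.single_le_sum (fun j _ => hμ j) (Finset.mem_univ i)) (sq_nonneg _)

/-- A nonnegative symmetric operator with spectrum below `T` has all eigenvalues at least
`det A / T ^ (n - 1)`. -/
lemma det_mul_sq_le (A : Eucl n →L[ℝ] Eucl n) (hs : ∀ a b, ⟪A a, b⟫ = ⟪a, A b⟫)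
    (hp : ∀ a, 0 ≤ ⟪A a, a⟫) (T : ℝ) (hT : ∀ a, ⟪A a, a⟫ ≤ T * ‖a‖ ^ 2) (a : Eucl n) :
    A.det * ‖a‖ ^ 2 ≤ T ^ (n - 1) * ⟪A a, a⟫ := by
  obtain ⟨μ, v, h1, -, h3, h4⟩ := exists_diag A hs
  have hv : ∀ i, ⟪A (v i), v i⟫ = μ i := fun i => by
    rw [h3, inner_smul_left, real_inner_self_eq_norm_sq, v.norm_eq_one]; simp
  have hμ : ∀ i, 0 ≤ μ i := fun i => hv i ▸ hp (v i)
  have hμT : ∀ i, μ i ≤ T := fun i => by simpa [hv] using hT (v i)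
  rw [h1, h4, ← v.sum_sq_inner_right a, Finset.mul_sum, Finset.mul_sum]
  refine Finset.sum_le_sum fun i _ => ?_
  rw [← mul_assoc]
  refine mul_le_mul_of_nonneg_right ?_ (sq_nonneg _)
  rw [← Finset.mul_prod_erase _ _ (Finset.mem_univ i), mul_comm]
  refine mul_le_mul_of_nonneg_right ?_ (hμ i)
  calc _ ≤ ∏ j ∈ Finset.univ.erase i, T := Finset.prod_le_prod (fun j _ => hμ j) fun j _ => hμT j
    _ = _ := by simp

lemma norm_le_of_quad (A : Eucl n →L[ℝ] Eucl n) (hs : ∀ a b, ⟪A a, b⟫ = ⟪a, A b⟫)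
    (hp : ∀ a, 0 ≤ ⟪A a, a⟫) (T : ℝ) (hT0 : 0 ≤ T) (hT : ∀ a, ⟪A a, a⟫ ≤ T * ‖a‖ ^ 2) : ‖A‖ ≤ T := by
  obtain ⟨μ, v, h1, -, h3, h4⟩ := exists_diag A hs
  have hv : ∀ i, ⟪A (v i), v i⟫ = μ i := fun i => by
    rw [h3, inner_smul_left, real_inner_self_eq_norm_sq, v.norm_eq_one]; simp
  have hμ : ∀ i, 0 ≤ μ i := fun i => hv i ▸ hp (v i)
  have hμT : ∀ i, μ i ≤ T := fun i => by simpa [hv] using hT (v i)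
  refine A.opNorm_le_bound hT0 fun a => ?_
  refine le_of_sq_le_sq ?_ (by positivity)
  rw [mul_pow, ← v.sum_sq_inner_right a, ← v.sum_sq_inner_right (A a), Finset.mul_sum]
  refine Finset.sum_le_sum fun i _ => ?_
  rw [← hs, h3, inner_smul_left, mul_pow]
  exact mul_le_mul_of_nonneg_right (pow_le_pow_left₀ (hμ i) (hμT i) 2) (sq_nonneg _)

lemma volume_cube (a b : ℝ) : volume {ξ : Eucl n | ∀ i, ξ i ∈ Ioo a b} = ENNReal.ofReal (b - a) ^ n := by
  have h := (PiLp.volume_preserving_ofLp (Fin n)).measure_preimage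
    (s := Set.pi univ fun _ => Ioo a b) (MeasurableSet.univ_pi fun _ => measurableSet_Ioo).nullMeasurableSet
  rw [Real.volume_pi_Ioo] at h
  simp only [Finset.prod_const, Finset.card_univ, Fintype.card_fin] at h
  rw [← h]
  congr 1
  ext ξ
  simp

/-- The map with columns `e i`. -/
lemma exists_columns (e : Fin n → Eucl n) :
    ∃ M : Eucl n →L[ℝ] Eucl n, (∀ ξ, M ξ = ∑ i, ξ i • e i) ∧
      M.det = (EuclideanSpace.basisFun (Fin n) ℝ).toBasis.det e := by
  set b := (EuclideanSpace.basisFun (Fin n) ℝ).toBasis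
  refine ⟨LinearMap.toContinuousLinearMap (b.constr ℝ e), fun ξ => ?_, ?_⟩
  · rw [LinearMap.coe_toContinuousLinearMap', Module.Basis.constr_apply_fintype]
    rfl
  · rw [LinearMap.det_toContinuousLinearMap]
    have := b.det_comp (b.constr ℝ e) b
    simpa [Function.comp_def, b.det_self] using this.symm

/-- The identity matrix with its `i`-th column replaced by `f` has determinant `f i`. -/
lemma det_update_one (f : Eucl n) (i : Fin n) :
    ∃ T : Eucl n →L[ℝ] Eucl n, T.det = f i ∧
      ∀ ξ, T ξ = ∑ j, ξ j • Function.update (fun j => EuclideanSpace.single j (1 : ℝ)) i f j := by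
  obtain ⟨T, h1, h2⟩ := exists_columns (Function.update (fun j => EuclideanSpace.single j (1 : ℝ)) i f)
  refine ⟨T, ?_, h1⟩
  rw [h2]
  set b := (EuclideanSpace.basisFun (Fin n) ℝ).toBasis
  have hb : (fun j => EuclideanSpace.single j (1 : ℝ)) = b := by ext j; simp [b]
  rw [hb]
  have hf : f = ∑ j, f j • b j := (b.sum_repr f).symm
  have : b.det (Function.update b i f) = ∑ j, f j * b.det (Function.update b i (b j)) := by
    conv_lhs => rw [hf]
    rw [AlternatingMap.map_update_sum]
    simp [AlternatingMap.map_update_smul]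
  rw [this, Finset.sum_eq_single i]
  · simp [b.det_self]
  · intro j _ hj
    rw [AlternatingMap.map_update_self _ _ hj.symm, mul_zero]
  · simp

lemma det_adj (M : Eucl n →L[ℝ] Eucl n) : (ContinuousLinearMap.adjoint M).det = M.det := by
  set b := (EuclideanSpace.basisFun (Fin n) ℝ)
  change LinearMap.det _ = LinearMap.det _
  rw [← LinearMap.det_toMatrix b.toBasis, ← LinearMap.det_toMatrix b.toBasis, ← Matrix.det_transpose]
  congr 1
  ext i j
  have h := ContinuousLinearMap.adjoint_inner_right M (EuclideanSpace.single j (1 : ℝ)) (EuclideanSpace.single i 1)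
  simpa [LinearMap.toMatrix_apply, b, Matrix.transpose_apply, PiLp.inner_apply] using h

end MALevel

/-! ### Affine frames of convex sets -/

namespace MALevel

open scoped RealInnerProductSpace
variable {n : ℕ}

/-- `M` is an affine frame of the convex set `Z` at `y`: in the coordinates `z = y + M ξ` the set `Z`
lies in the cube `[-1, 1]ⁿ` and contains the corner simplex `{ξ ≥ 0, ∑ ξ i < 1}`; the points `y + M eᵢ` may lie
on the boundary of `Z`. -/
structure IsFrame (Z : Set (Eucl n)) (y : Eucl n) (M : Eucl n →L[ℝ] Eucl n) : Prop where
  det_ne : M.det ≠ 0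
  cover : ∀ z ∈ Z, ∃ ξ : Eucl n, z = y + M ξ ∧ ∀ i, |ξ i| ≤ 1
  vertex : ∀ i, y + M (EuclideanSpace.single i 1) ∈ closure Z
  simplex : ∀ ξ : Eucl n, (∀ i, 0 ≤ ξ i) → ∑ i, ξ i < 1 → y + M ξ ∈ Z

/-- Frames exist: among the simplices with one vertex at `y` and the others in `closure Z`, take one of maximal
volume. By Cramer's rule, a point of `Z` with a frame coordinate of modulus `> 1` could replace the corresponding
vertex and increase the volume. -/
lemma exists_frame {Z : Set (Eucl n)} (ho : IsOpen Z) (hc : Convex ℝ Z) (hb : Bornology.IsBounded Z)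
    {y : Eucl n} (hy : y ∈ Z) : ∃ M, IsFrame Z y M := by
  set b := (EuclideanSpace.basisFun (Fin n) ℝ).toBasis with hbdef
  have hK : IsCompact (Set.pi univ fun _ : Fin n => closure Z) :=
    isCompact_univ_pi fun _ => hb.isCompact_closure
  have hcont : Continuous fun e : Fin n → Eucl n => |b.det fun i => e i - y| := by
    have : Continuous fun e : Fin n → Eucl n => b.det e := by
      simp only [Module.Basis.det_apply]
      refine Continuous.matrix_det (continuous_matrix fun i j => ?_)
      simp only [Module.Basis.toMatrix_apply, hbdef, OrthonormalBasis.coe_toBasis_repr_apply,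
        EuclideanSpace.basisFun_repr]
      fun_prop
    exact (this.comp (by fun_prop : Continuous fun e : Fin n → Eucl n => fun i => e i - y)).abs
  obtain ⟨e, heK, hmax⟩ := hK.exists_isMaxOn ⟨fun _ => y, fun _ _ => subset_closure hy⟩ hcont.continuousOn
  have he : ∀ i, e i ∈ closure Z := fun i => heK i (mem_univ i)
  have hdet : b.det (fun i => e i - y) ≠ 0 := by
    obtain ⟨r, hr, hball⟩ := Metric.isOpen_iff.1 ho y hy
    have hmem : (fun i => y + (r/2) • b i) ∈ Set.pi univ fun _ : Fin n => closure Z := fun i _ => by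
      refine subset_closure (hball ?_)
      have : ‖b i‖ = 1 := by simp [hbdef]
      rw [mem_ball, dist_eq_norm, add_sub_cancel_left, norm_smul, this, Real.norm_of_nonneg (by positivity)]
      linarith
    have h := hmax hmem
    simp only [add_sub_cancel_left, mem_ofPred_eq] at h
    have h2 : b.det (fun i => (r/2) • b i) = (r/2)^n := by
      rw [AlternatingMap.map_smul_univ b.det (fun _ => r/2) b]
      simp only [Finset.prod_const, Finset.card_univ, Fintype.card_fin, b.det_self, smul_eq_mul, mul_one]
    rw [h2] at h
    intro h0
    rw [h0, abs_zero] at h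
    exact absurd h (not_le.2 (by positivity))
  obtain ⟨M, hM, hMdet⟩ := exists_columns fun i => e i - y
  have hcoord : ∀ z ∈ closure Z, ∃ ξ : Eucl n, z = y + M ξ ∧ ∀ i, |ξ i| ≤ 1 := by
    intro z hz
    have hbas := (Module.Basis.is_basis_iff_det b (v := fun i => e i - y)).2 (isUnit_iff_ne_zero.2 hdet)
    let c := Module.Basis.mk hbas.1 hbas.2.ge
    refine ⟨WithLp.toLp 2 fun i => c.repr (z - y) i, ?_, fun i => ?_⟩
    · rw [hM, ← sub_eq_iff_eq_add']
      conv_lhs => rw [← c.sum_repr (z - y)]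
      simp [c]
    · have h1 : b.det (Function.update (fun i => e i - y) i (z - y)) = c.repr (z - y) i * b.det (fun i => e i - y) := by
        conv_lhs => rw [← c.sum_repr (z - y)]
        rw [AlternatingMap.map_update_sum, Finset.sum_eq_single i]
        · rw [AlternatingMap.map_update_smul]
          simp [c]
        · intro j _ hj
          rw [AlternatingMap.map_update_smul]
          have : c j = (fun i => e i - y) j := by simp [c]
          rw [this, AlternatingMap.map_update_self _ _ hj.symm, smul_zero]
        · simp
      have hmem : Function.update e i z ∈ Set.pi univ fun _ : Fin n => closure Z := fun j _ => by
        rcases eq_or_ne j i with rfl | h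
        · simpa using hz
        · simpa [h] using he j
      have h := hmax hmem
      have h3 : (fun j => Function.update e i z j - y) = Function.update (fun i => e i - y) i (z - y) := by
        ext1 j
        rcases eq_or_ne j i with rfl | h
        · simp
        · simp [h]
      simp only [mem_ofPred_eq] at h
      rw [h3, h1, abs_mul] at h
      exact le_of_mul_le_mul_right (by simpa using h) (abs_pos.2 hdet)
  refine ⟨M, hMdet ▸ hdet, fun z hz => hcoord z (subset_closure hz), fun i => ?_, fun ξ hξ hs => ?_⟩
  · have : M (EuclideanSpace.single i 1) = e i - y := by
      rw [hM, Finset.sum_eq_single i] <;> simp +contextual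
    simpa [this] using he i
  · have hsum : 0 ≤ ∑ i, ξ i := Finset.sum_nonneg fun i _ => hξ i
    rcases hsum.eq_or_lt with h0 | hpos
    · have : ∀ i, ξ i = 0 := fun i => (Finset.sum_eq_zero_iff_of_nonneg fun i _ => hξ i).1 h0.symm i (Finset.mem_univ i)
      have : ξ = 0 := by ext i; simp [this]
      simpa [this] using hy
    set s := ∑ i, ξ i with hsdef
    have hq : (∑ i, (ξ i / s) • e i) ∈ closure Z :=
      hc.closure.sum_mem (fun i _ => div_nonneg (hξ i) hsum) (by rw [← Finset.sum_div, div_self hpos.ne']) fun i _ => he i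
    have hyi : y ∈ interior Z := by rwa [ho.interior_eq]
    have h := hc.combo_interior_closure_mem_interior hyi hq (a := 1 - s) (b := s) (by linarith) hsum (by ring)
    rw [ho.interior_eq] at h
    convert h using 1
    rw [hM, Finset.smul_sum]
    simp only [smul_sub, smul_smul, Finset.sum_sub_distrib, ← Finset.sum_smul, ← hsdef, mul_div_cancel₀ _ hpos.ne']
    module

lemma IsFrame.exists_coord {Z : Set (Eucl n)} {y : Eucl n} {M} (h : IsFrame Z y M) (a : Eucl n) :
    ∃ ξ, M ξ = a := by
  exact ((LinearMap.equivOfDetNeZero (M : Eucl n →ₗ[ℝ] Eucl n) h.det_ne).surjective a)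

lemma volume_image (M : Eucl n →L[ℝ] Eucl n) (y : Eucl n) (S : Set (Eucl n)) :
    volume ((fun ξ => y + M ξ) '' S) = ENNReal.ofReal |M.det| * volume S := by
  rw [← Measure.addHaar_image_continuousLinearMap]
  refine Eq.trans ?_ (measure_preimage_add volume (-y) (M '' S))
  congr 1
  ext z
  simp only [mem_image, mem_preimage, neg_add_eq_sub, eq_sub_iff_add_eq, add_comm y]

/-- The volume of `Z` is comparable to `|det M|`: upper bound by the cube. -/
lemma IsFrame.volume_le {Z : Set (Eucl n)} {y : Eucl n} {M} (h : IsFrame Z y M) :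
    volume Z ≤ ENNReal.ofReal (4 ^ n * |M.det|) := by
  calc volume Z ≤ volume ((fun ξ => y + M ξ) '' {ξ : Eucl n | ∀ i, ξ i ∈ Ioo (-2 : ℝ) 2}) := by
        refine measure_mono fun z hz => ?_
        obtain ⟨ξ, rfl, hξ⟩ := h.cover z hz
        exact ⟨ξ, fun i => ⟨by linarith [(abs_le.1 (hξ i)).1], by linarith [(abs_le.1 (hξ i)).2]⟩, rfl⟩
    _ = _ := by
        rw [volume_image, volume_cube, mul_comm, ENNReal.ofReal_mul (by positivity), ENNReal.ofReal_pow (by norm_num)]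
        norm_num

/-- The volume of `Z` is comparable to `|det M|`: lower bound by a cube inside the simplex. -/
lemma IsFrame.le_volume {Z : Set (Eucl n)} {y : Eucl n} {M} (hn : 1 ≤ n) (h : IsFrame Z y M) :
    ENNReal.ofReal ((1/n) ^ n * |M.det|) ≤ volume Z := by
  have hn' : (0:ℝ) < n := by exact_mod_cast hn
  calc _ = volume ((fun ξ => y + M ξ) '' {ξ : Eucl n | ∀ i, ξ i ∈ Ioo (0 : ℝ) (1/n)}) := by
        rw [volume_image, volume_cube, mul_comm, ENNReal.ofReal_mul (by positivity), ENNReal.ofReal_pow (by positivity), sub_zero]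
    _ ≤ _ := by
        refine measure_mono ?_
        rintro z ⟨ξ, hξ, rfl⟩
        refine h.simplex ξ (fun i => (hξ i).1.le) ?_
        have : Nonempty (Fin n) := ⟨⟨0, hn⟩⟩
        calc ∑ i, ξ i < ∑ i : Fin n, (1/n : ℝ) := Finset.sum_lt_sum_of_nonempty Finset.univ_nonempty fun i _ => (hξ i).2
          _ = 1 := by simp; field_simp

end MALevel

/-! ### Solutions on convex domains and the gradient map -/

namespace MALevel

open scoped RealInnerProductSpace
variable {n : ℕ}

/-- `w` is a convex function on the bounded convex domain `Z` with `lam ≤ det D²w ≤ Lam`, vanishing on `∂Z`;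
`G` is its gradient and `B` its Hessian. -/
structure MADomain (lam Lam : ℝ) (Z : Set (Eucl n)) (w : Eucl n → ℝ) (G : Eucl n → Eucl n)
    (B : Eucl n → Eucl n →L[ℝ] Eucl n) : Prop where
  isOpen : IsOpen Z
  convex : Convex ℝ Z
  bounded : Bornology.IsBounded Z
  cont : ContinuousOn w (closure Z)
  bdry : ∀ x ∈ frontier Z, w x = 0
  nonpos : ∀ x ∈ Z, w x ≤ 0
  tangent : ∀ x ∈ Z, ∀ y ∈ Z, w x + ⟪G x, y - x⟫ ≤ w y
  grad : ∀ x ∈ Z, HasFDerivAt w (innerSL ℝ (G x)) x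
  hess : ∀ x ∈ Z, HasFDerivAt G (B x) x
  contB : ContinuousOn B Z
  symm : ∀ x ∈ Z, ∀ a b, ⟪B x a, b⟫ = ⟪a, B x b⟫
  nonneg : ∀ x ∈ Z, ∀ a, 0 ≤ ⟪B x a, a⟫
  le_det : ∀ x ∈ Z, lam ≤ (B x).det
  det_le : ∀ x ∈ Z, (B x).det ≤ Lam

variable {lam Lam : ℝ} {Z : Set (Eucl n)} {w : Eucl n → ℝ} {G : Eucl n → Eucl n}
    {B : Eucl n → Eucl n →L[ℝ] Eucl n}

/-- The part of `Z` where `w` lies below an affine function that is nonpositive on `Z` is again a domain of a solution: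
the difference vanishes on its boundary, because `w` vanishes on `∂Z`. -/
lemma MADomain.cut (h : MADomain lam Lam Z w G B) (a : ℝ) (p : Eucl n)
    (hL : ∀ x ∈ Z, a + ⟪p, x⟫ ≤ 0) :
    MADomain lam Lam {x ∈ Z | w x < a + ⟪p, x⟫} (fun x => w x - (a + ⟪p, x⟫)) (fun x => G x - p) B := by
  have hLc : Continuous fun x : Eucl n => a + ⟪p, x⟫ := by fun_prop
  have hsub : {x ∈ Z | w x < a + ⟪p, x⟫} ⊆ Z := fun x hx => hx.1
  have hwZ : ContinuousOn w Z := h.cont.mono subset_closure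
  have ho : IsOpen {x ∈ Z | w x < a + ⟪p, x⟫} := by
    have := (hwZ.sub hLc.continuousOn).isOpen_inter_preimage h.isOpen isOpen_Iio (t := Iio 0)
    convert this using 1
    ext x; simp [sub_neg]
  refine ⟨ho, ?_, h.bounded.subset hsub, (h.cont.mono (closure_mono hsub)).sub hLc.continuousOn, ?_,
    fun x hx => by linarith [hx.2], ?_, ?_, ?_, h.contB.mono hsub, fun x hx => h.symm x hx.1, fun x hx => h.nonneg x hx.1,
    fun x hx => h.le_det x hx.1, fun x hx => h.det_le x hx.1⟩
  · rintro x hx y hy s t hs ht hst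
    have hz := h.convex hx.1 hy.1 hs ht hst
    refine ⟨hz, ?_⟩
    -- convexity of `w` follows from the tangent inequality at the intermediate point
    have h1 := h.tangent _ hz _ hx.1
    have h2 := h.tangent _ hz _ hy.1
    set q := s • x + t • y with hq
    have h3 : s * ⟪G q, x - q⟫ + t * ⟪G q, y - q⟫ = 0 := by
      rw [← inner_smul_right, ← inner_smul_right, ← inner_add_right]
      have : s • (x - q) + t • (y - q) = 0 := by
        have : s • (x - q) + t • (y - q) = q - (s + t) • q := by rw [hq]; module
        rw [this, hst]; simp
      rw [this, inner_zero_right]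
    have h4 : ⟪p, q⟫ = s * ⟪p, x⟫ + t * ⟪p, y⟫ := by
      rw [hq, inner_add_right, inner_smul_right, inner_smul_right]
    have hx2 := hx.2
    have hy2 := hy.2
    rw [h4]
    have ht' : t = 1 - s := by linarith
    have e1 : w q ≤ s * w x + t * w y := by
      have := mul_le_mul_of_nonneg_left h1 hs
      have := mul_le_mul_of_nonneg_left h2 ht
      have : (s + t) * w q = w q := by rw [hst, one_mul]
      nlinarith
    have e2 : s * w x + t * w y < s * (a + ⟪p, x⟫) + t * (a + ⟪p, y⟫) := by
      rcases hs.eq_or_lt with h0 | h0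
      · have : t = 1 := by linarith
        rw [this, ← h0]; linarith
      · have := mul_lt_mul_of_pos_left hx2 h0
        have := mul_le_mul_of_nonneg_left hy2.le ht
        linarith
    have e3 : s * (a + ⟪p, x⟫) + t * (a + ⟪p, y⟫) = a + (s * ⟪p, x⟫ + t * ⟪p, y⟫) := by rw [ht']; ring
    linarith
  · intro x hx
    have hxc : x ∈ closure {x ∈ Z | w x < a + ⟪p, x⟫} := frontier_subset_closure hx
    have hxn : x ∉ {x ∈ Z | w x < a + ⟪p, x⟫} := fun hh => by
      rw [ho.frontier_eq] at hx
      exact hx.2 hh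
    have hcl : IsClosed (closure Z ∩ (fun x => w x - (a + ⟪p, x⟫)) ⁻¹' Iic 0) :=
      (h.cont.sub hLc.continuousOn).preimage_isClosed_of_isClosed isClosed_closure isClosed_Iic
    have hx1 : x ∈ closure Z ∩ (fun x => w x - (a + ⟪p, x⟫)) ⁻¹' Iic 0 :=
      closure_minimal (t := closure Z ∩ (fun x => w x - (a + ⟪p, x⟫)) ⁻¹' Iic 0)
        (fun z hz => mem_inter (subset_closure hz.1) (mem_preimage.2 (mem_Iic.2 (sub_nonpos.2 hz.2.le)))) hcl hxc
    have hle : w x - (a + ⟪p, x⟫) ≤ 0 := hx1.2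
    have hge : 0 ≤ w x - (a + ⟪p, x⟫) := by
      by_cases hxZ : x ∈ Z
      · by_contra hlt
        exact hxn ⟨hxZ, by linarith⟩
      · have hxf : x ∈ frontier Z := by rw [h.isOpen.frontier_eq]; exact ⟨hx1.1, hxZ⟩
        rw [h.bdry x hxf]
        have : a + ⟪p, x⟫ ≤ 0 :=
          closure_minimal (s := Z) (t := {x | a + ⟪p, x⟫ ≤ 0}) hL (isClosed_le hLc continuous_const) hx1.1
        linarith
    exact le_antisymm hle hge
  · intro x hx y hy
    have := h.tangent x hx.1 y hy.1
    rw [inner_sub_left, inner_sub_right p]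
    linarith
  · intro x hx
    have h2 : HasFDerivAt (fun x : Eucl n => a + ⟪p, x⟫) (innerSL ℝ p) x := by
      simpa using ((innerSL ℝ p).hasFDerivAt (x := x)).const_add a
    have := (h.grad x hx.1).sub h2
    rw [map_sub]
    exact this
  · intro x hx
    exact (h.hess x hx.1).sub_const p

/-- The gradient map is injective: if `G x = G y`, Rolle's theorem along the segment from `x` to `y` gives a point
where the Hessian annihilates `y - x`, contradicting `det D²w ≥ lam > 0`. -/
lemma MADomain.injOn (hlam : 0 < lam) (h : MADomain lam Lam Z w G B) : InjOn G Z := by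
  intro x hx y hy hxy
  by_contra hne
  set v := y - x with hv
  have hv0 : v ≠ 0 := sub_ne_zero.2 (Ne.symm hne)
  have hmem : ∀ t ∈ Icc (0:ℝ) 1, x + t • v ∈ Z := fun t ht => by
    have := h.convex hx hy (a := 1 - t) (b := t) (by linarith [ht.2]) ht.1 (by ring)
    convert this using 1; rw [hv]; module
  have hd : ∀ t ∈ Icc (0:ℝ) 1, HasDerivAt (fun t : ℝ => ⟪G (x + t • v), v⟫) ⟪B (x + t • v) v, v⟫ t := fun t ht => by
    have h1 : HasDerivAt (fun t : ℝ => x + t • v) v t := by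
      simpa using ((hasDerivAt_id t).smul_const v).const_add x
    have h2 := (h.hess _ (hmem t ht)).comp_hasDerivAt t h1
    simpa using h2.inner ℝ (hasDerivAt_const t v)
  obtain ⟨t, ht, h0⟩ := exists_hasDerivAt_eq_zero (f := fun t : ℝ => ⟪G (x + t • v), v⟫)
    (f' := fun t => ⟪B (x + t • v) v, v⟫) (a := 0) (b := 1) one_pos
    (fun t ht => (hd t ht).continuousAt.continuousWithinAt) (by simp [hv, hxy])
    (fun t ht => hd t (Ioo_subset_Icc_self ht))
  have hz := hmem t (Ioo_subset_Icc_self ht)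
  have h3 := det_mul_sq_le (B (x + t • v)) (h.symm _ hz) (h.nonneg _ hz) ‖B (x + t • v)‖ (fun a => by
    calc ⟪B (x + t • v) a, a⟫ ≤ ‖B (x + t • v) a‖ * ‖a‖ := real_inner_le_norm _ _
      _ ≤ (‖B (x + t • v)‖ * ‖a‖) * ‖a‖ := by gcongr; exact (B (x + t • v)).le_opNorm a
      _ = _ := by ring) v
  rw [h0, mul_zero] at h3
  have := h.le_det _ hz
  have : 0 < ‖v‖ ^ 2 := by positivity
  nlinarith

lemma MADomain.volume_grad_le (h : MADomain lam Lam Z w G B) (hlam : 0 < lam) :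
    volume (G '' Z) ≤ ENNReal.ofReal Lam * volume Z := by
  calc volume (G '' Z) ≤ ∫⁻ x in Z, ENNReal.ofReal |(B x).det| :=
        addHaar_image_le_lintegral_abs_det_fderiv volume h.isOpen.measurableSet
          fun x hx => (h.hess x hx).hasFDerivWithinAt
    _ ≤ ∫⁻ x in Z, ENNReal.ofReal Lam := setLIntegral_mono measurable_const fun x hx =>
        ENNReal.ofReal_le_ofReal (by rw [abs_of_nonneg (hlam.le.trans (h.le_det x hx))]; exact h.det_le x hx)
    _ = _ := by simp

lemma MADomain.le_volume_grad (h : MADomain lam Lam Z w G B) (hlam : 0 < lam) {Q : Set (Eucl n)}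
    (hQ : MeasurableSet Q) (hQZ : Q ⊆ Z) :
    ENNReal.ofReal lam * volume Q ≤ volume (G '' Q) := by
  rw [← lintegral_abs_det_fderiv_eq_addHaar_image volume hQ
    (fun x hx => (h.hess x (hQZ hx)).hasFDerivWithinAt) ((h.injOn hlam).mono hQZ), ← setLIntegral_const]
  refine setLIntegral_mono' hQ fun x hx => ENNReal.ofReal_le_ofReal ?_
  exact (h.le_det x (hQZ hx)).trans (le_abs_self _)

end MALevel

/-! ### Volume estimates and Alexandrov's maximum principle -/

namespace MALevel

open scoped RealInnerProductSpace
variable {n : ℕ}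
variable {lam Lam : ℝ} {Z : Set (Eucl n)} {w : Eucl n → ℝ} {G : Eucl n → Eucl n}
    {B : Eucl n → Eucl n →L[ℝ] Eucl n}

/-- Domains of depth `d` have volume at most `C d ^ (n / 2)`: the gradient of `w` is bounded by
a multiple of `d` (in frame coordinates) on a cube well inside the simplex. -/
lemma MADomain.det_frame_le (hn : 1 ≤ n) (hlam : 0 < lam) (h : MADomain lam Lam Z w G B) {d : ℝ} (hd : 0 < d)
    (hw : ∀ z ∈ Z, -d ≤ w z) {y : Eucl n} {M} (hM : IsFrame Z y M) :
    lam * |M.det| ^ 2 ≤ (40 * n ^ 2 : ℝ) ^ n * d ^ n := by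
  have hn' : (0:ℝ) < n := by exact_mod_cast hn
  -- `Q0` stays at distance `1 / (8n)` from the faces of the simplex in every coordinate direction
  set Q0 : Set (Eucl n) := {ξ : Eucl n | ∀ i, ξ i ∈ Ioo (1/(4*n) : ℝ) (3/(4*n))} with hQ0
  set Q := (fun ξ => y + M ξ) '' Q0 with hQ
  have hsum : ∀ ξ ∈ Q0, ∑ i, ξ i ≤ 3/4 := fun ξ hξ => by
    calc ∑ i, ξ i ≤ ∑ i : Fin n, (3/(4*n) : ℝ) := Finset.sum_le_sum fun i _ => (hξ i).2.le
      _ = _ := by simp; field_simp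
  have hstep : ∀ ξ ∈ Q0, ∀ i, ∀ s : ℝ, |s| ≤ 1/(8*n) → y + M ξ + M (s • EuclideanSpace.single i 1) ∈ Z := by
    intro ξ hξ i s hs
    have hs' := abs_le.1 hs
    have hq : (1:ℝ)/(8*n) ≤ 1/(4*n) := by gcongr; norm_num
    have hq8 : (1:ℝ)/(8*n) ≤ 1/8 := by
      have : (1:ℝ) ≤ n := by exact_mod_cast hn
      gcongr; linarith
    rw [add_assoc, ← map_add]
    refine hM.simplex _ (fun j => ?_) ?_
    · have := (hξ j).1
      rcases eq_or_ne j i with rfl | hne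
      · simp; linarith
      · simp [hne]; linarith [(show (0:ℝ) ≤ 1/(8*n) by positivity)]
    · have : ∑ j, (ξ + s • EuclideanSpace.single i (1:ℝ)) j = ∑ j, ξ j + s := by
        simp [Finset.sum_add_distrib, Finset.sum_ite_eq']
      rw [this]
      have := hsum ξ hξ
      linarith
  have hQZ : Q ⊆ Z := by
    rintro _ ⟨ξ, hξ, rfl⟩
    have := hstep ξ hξ ⟨0, hn⟩ 0 (by simp)
    simpa using this
  have hQm : MeasurableSet Q := by
    have ho : IsOpen Q0 := by
      have : Q0 = ⋂ i, (fun ξ : Eucl n => ξ i) ⁻¹' Ioo (1/(4*n) : ℝ) (3/(4*n)) := by ext; simp [hQ0]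
      rw [this]
      exact isOpen_iInter_of_finite fun i => isOpen_Ioo.preimage (by fun_prop)
    let e := (LinearMap.equivOfDetNeZero (M : Eucl n →ₗ[ℝ] Eucl n) hM.det_ne).toContinuousLinearEquiv
    have : Q = (Homeomorph.addLeft y) '' (e.toHomeomorph '' Q0) := by
      rw [image_image]; rfl
    rw [this]
    exact ((Homeomorph.isOpen_image _).2 ((Homeomorph.isOpen_image _).2 ho)).measurableSet
  have hgrad : (fun ξ => (0 : Eucl n) + (ContinuousLinearMap.adjoint M) ξ) '' (G '' Q) ⊆
      {ξ : Eucl n | ∀ i, ξ i ∈ Ioo (-(10*n*d)) (10*n*d)} := by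
    rintro _ ⟨_, ⟨x, ⟨ξ, hξ, rfl⟩, rfl⟩, rfl⟩ i
    set x := y + M ξ
    have hx : x ∈ Z := hQZ ⟨ξ, hξ, rfl⟩
    have e1 : ((0 : Eucl n) + (ContinuousLinearMap.adjoint M) (G x)) i = ⟪G x, M (EuclideanSpace.single i 1)⟫ := by
      rw [zero_add, ← ContinuousLinearMap.adjoint_inner_left]
      simp [PiLp.inner_apply]
    have key : ∀ s : ℝ, |s| ≤ 1/(8*n) → s * ⟪G x, M (EuclideanSpace.single i 1)⟫ ≤ d := by
      intro s hs
      have h1 := h.tangent x hx _ (hstep ξ hξ i s hs)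
      have h2 := h.nonpos _ (hstep ξ hξ i s hs)
      have h3 := hw x hx
      have : x + M (s • EuclideanSpace.single i 1) - x = s • M (EuclideanSpace.single i 1) := by simp
      rw [this, inner_smul_right] at h1
      linarith
    have k1 := key (1/(8*n)) (abs_of_nonneg (by positivity)).le
    have k2 := key (-(1/(8*n))) (by rw [abs_neg, abs_of_nonneg (by positivity)])
    change _ ∈ _
    rw [e1]
    have hnd : 0 < n * d := by positivity
    constructor
    · have := mul_le_mul_of_nonneg_left k2 (show (0:ℝ) ≤ 8*n by positivity)
      field_simp at this
      linarith
    · have := mul_le_mul_of_nonneg_left k1 (show (0:ℝ) ≤ 8*n by positivity)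
      field_simp at this
      linarith
  have h1 := h.le_volume_grad hlam hQm hQZ
  have h2 := measure_mono (μ := volume) hgrad
  rw [volume_image, volume_cube, det_adj] at h2
  rw [hQ, volume_image, volume_cube, ← hQ] at h1
  have h3 : ENNReal.ofReal (|M.det| * (lam * (|M.det| * (1/(2*n)) ^ n))) ≤ ENNReal.ofReal ((20*n*d)^n) := by
    rw [ENNReal.ofReal_mul (abs_nonneg _), ENNReal.ofReal_mul hlam.le, ENNReal.ofReal_mul (abs_nonneg _),
      ENNReal.ofReal_pow (by positivity), ENNReal.ofReal_pow (by positivity)]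
    have e1 : (3/(4*n) - 1/(4*n) : ℝ) = 1/(2*n) := by field_simp; norm_num
    have e2 : (10*n*d - -(10*n*d) : ℝ) = 20*n*d := by ring
    rw [e1] at h1
    rw [e2] at h2
    exact (mul_le_mul_right h1 _).trans h2
  rw [ENNReal.ofReal_le_ofReal_iff (by positivity)] at h3
  calc lam * |M.det| ^ 2 = (|M.det| * (lam * (|M.det| * (1/(2*n)) ^ n))) * (2*n) ^ n := by
        rw [div_pow]; field_simp; simp
    _ ≤ (20*n*d)^n * (2*n) ^ n := by gcongr
    _ = _ := by rw [← mul_pow, ← mul_pow]; ring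

/-- A slope whose affine function through `(y, w y)` stays below `0` on `∂Z` is attained by the gradient. -/
lemma MADomain.mem_image_grad (h : MADomain lam Lam Z w G B) {y : Eucl n} (hy : y ∈ Z) (p : Eucl n)
    (hp : ∀ z ∈ frontier Z, w y + ⟪p, z - y⟫ < 0) : p ∈ G '' Z := by
  have hc : ContinuousOn (fun z => w z - ⟪p, z⟫) (closure Z) := h.cont.sub (by fun_prop)
  obtain ⟨x, hx, hmin⟩ := h.bounded.isCompact_closure.exists_isMinOn ⟨y, subset_closure hy⟩ hc
  have hxZ : x ∈ Z := by
    by_contra hxn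
    have hxf : x ∈ frontier Z := by rw [h.isOpen.frontier_eq]; exact ⟨hx, hxn⟩
    have h1 := hmin (subset_closure hy)
    have h2 := hp x hxf
    simp only [mem_ofPred_eq] at h1
    rw [h.bdry x hxf] at h1
    rw [inner_sub_right] at h2
    linarith
  refine ⟨x, hxZ, ?_⟩
  have hd : HasFDerivAt (fun z => w z - ⟪p, z⟫) (innerSL ℝ (G x) - innerSL ℝ p) x :=
    (h.grad x hxZ).sub ((innerSL ℝ p).hasFDerivAt (x := x))
  have hloc : IsLocalMin (fun z => w z - ⟪p, z⟫) x :=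
    (hmin.isLocalMin (Filter.mem_of_superset (h.isOpen.mem_nhds hxZ) subset_closure))
  have h0 := hloc.hasFDerivAt_eq_zero hd
  rw [← map_sub] at h0
  have := congrArg (fun L => L (G x - p)) h0
  simp only [innerSL_apply_apply, _root_.zero_apply, inner_self_eq_zero] at this
  exact sub_eq_zero.1 this

/-- Alexandrov's maximum principle: a large vector `f` of the polar body of `Z - y` forces `Z` to be large
compared with `|w y|`. The dual basis of the frame lies in the polar body, and so does the system `g` obtained from it
by replacing the `i`-th vector with `f`; multiples of `|w y|` of these vectors span a parallelepiped inside `G(Z)`,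
whose volume is at most `Lam * vol Z`. -/
lemma MADomain.alexandrov (hn : 1 ≤ n) (hlam : 0 < lam) (hLam : 0 < Lam) (h : MADomain lam Lam Z w G B) {y : Eucl n} (hy : y ∈ Z)
    (hwy : w y < 0) {M} (hM : IsFrame Z y M) (f : Eucl n) (hf : ∀ z ∈ Z, ⟪f, z - y⟫ ≤ 1) (i : Fin n) :
    (- w y) ^ n * |⟪f, M (EuclideanSpace.single i 1)⟫| ≤ (4 * n) ^ n * Lam * |M.det| ^ 2 := by
  have hn' : (0:ℝ) < n := by exact_mod_cast hn
  set d := - w y with hd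
  have hdpos : 0 < d := by linarith
  set A := ContinuousLinearMap.adjoint M with hA
  have hAdet : A.det ≠ 0 := by rw [hA, det_adj]; exact hM.det_ne
  have hsurj : ∀ q, ∃ p, A p = q := fun q =>
    (LinearMap.equivOfDetNeZero (A : Eucl n →ₗ[ℝ] Eucl n) hAdet).surjective q
  choose S hS using hsurj
  set g : Fin n → Eucl n := Function.update (fun j => S (EuclideanSpace.single j 1)) i f with hg
  have hgpol : ∀ j, ∀ z ∈ Z, ⟪g j, z - y⟫ ≤ 1 := by
    intro j z hz
    rcases eq_or_ne j i with rfl | hne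
    · simpa [hg] using hf z hz
    · obtain ⟨ξ, rfl, hξ⟩ := hM.cover z hz
      have : ⟪g j, y + M ξ - y⟫ = ξ j := by
        rw [add_sub_cancel_left, ← ContinuousLinearMap.adjoint_inner_left, ← hA]
        simp [hg, hne, hS, PiLp.inner_apply]
      rw [this]
      exact (le_abs_self _).trans (hξ j)
  obtain ⟨N, hN, -⟩ := exists_columns g
  obtain ⟨T, hTdet, hT⟩ := det_update_one (A f) i
  have hAN : A.comp N = T := by
    ext1 ξ
    rw [ContinuousLinearMap.comp_apply, hN, hT, map_sum]
    refine Finset.sum_congr rfl fun j _ => ?_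
    rw [map_smul]
    congr 1
    rcases eq_or_ne j i with rfl | hne
    · simp [hg]
    · simp [hg, hne, hS]
  have hdet : M.det * N.det = ⟪f, M (EuclideanSpace.single i 1)⟫ := by
    have e1 : (A.comp N).det = A.det * N.det := LinearMap.det_comp _ _
    have e2 : A f i = ⟪f, M (EuclideanSpace.single i 1)⟫ := by
      rw [← ContinuousLinearMap.adjoint_inner_left, ← hA]
      simp [PiLp.inner_apply]
    rw [← det_adj M, ← hA, ← e1, hAN, hTdet, e2]
  have himg : (fun ξ => (0 : Eucl n) + N ξ) '' {ξ : Eucl n | ∀ i, ξ i ∈ Ioo (0:ℝ) (d/n)} ⊆ G '' Z := by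
    rintro _ ⟨a, ha, rfl⟩
    refine h.mem_image_grad hy _ fun z hz => ?_
    have : Nonempty (Fin n) := ⟨i⟩
    have hsum : ∑ j, a j < d := by
      calc ∑ i, a i < ∑ i : Fin n, (d/n : ℝ) := Finset.sum_lt_sum_of_nonempty Finset.univ_nonempty fun i _ => (ha i).2
        _ = d := by simp; field_simp
    have hcl : ⟪(0 : Eucl n) + N a, z - y⟫ ≤ ∑ j, a j := by
      refine closure_minimal (s := Z) (t := {z | ⟪(0 : Eucl n) + N a, z - y⟫ ≤ ∑ j, a j}) (fun z hz => ?_)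
        (isClosed_le (by fun_prop) continuous_const) (frontier_subset_closure hz)
      change ⟪(0 : Eucl n) + N a, z - y⟫ ≤ ∑ j, a j
      rw [zero_add, hN, sum_inner]
      refine Finset.sum_le_sum fun j _ => ?_
      rw [real_inner_smul_left]
      exact mul_le_of_le_one_right (ha j).1.le (hgpol j z hz)
    linarith
  have h1 := (measure_mono himg).trans (h.volume_grad_le hlam)
  rw [volume_image, volume_cube, sub_zero] at h1
  have h2 := h1.trans (mul_le_mul_right hM.volume_le _)
  rw [← ENNReal.ofReal_pow (by positivity), ← ENNReal.ofReal_mul (by positivity), ← ENNReal.ofReal_mul hLam.le,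
    ENNReal.ofReal_le_ofReal_iff (by positivity), div_pow] at h2
  rw [← hdet, abs_mul]
  have h3 := mul_le_mul_of_nonneg_left h2 (show 0 ≤ |M.det| * (n:ℝ)^n by positivity)
  calc d ^ n * (|M.det| * |N.det|) = |M.det| * (n:ℝ)^n * (|N.det| * (d ^ n / (n:ℝ)^n)) := by field_simp
    _ ≤ _ := h3
    _ = _ := by rw [mul_pow]; ring

end MALevel

/-! ### Balance of deep points -/

namespace MALevel

open scoped RealInnerProductSpace
variable {n : ℕ}
variable {lam Lam : ℝ} {Z : Set (Eucl n)} {w : Eucl n → ℝ} {G : Eucl n → Eucl n}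
    {B : Eucl n → Eucl n →L[ℝ] Eucl n}

/-- `|w y| ^ n ≤ C |det M| ^ 2`: Alexandrov's principle applied to a vector of the dual basis of the frame. -/
lemma MADomain.pow_le_det (hn : 1 ≤ n) (hlam : 0 < lam) (hLam : 0 < Lam) (h : MADomain lam Lam Z w G B)
    {y : Eucl n} (hy : y ∈ Z) (hwy : w y < 0) {M} (hM : IsFrame Z y M) :
    (- w y) ^ n ≤ (4 * n) ^ n * Lam * |M.det| ^ 2 := by
  have hAdet : (ContinuousLinearMap.adjoint M).det ≠ 0 := by rw [det_adj]; exact hM.det_ne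
  obtain ⟨f, hf⟩ := (LinearMap.equivOfDetNeZero (ContinuousLinearMap.adjoint M : Eucl n →ₗ[ℝ] Eucl n) hAdet).surjective
    (EuclideanSpace.single ⟨0, hn⟩ 1)
  change (ContinuousLinearMap.adjoint M) f = _ at hf
  have hfM : ∀ ξ, ⟪f, M ξ⟫ = ξ ⟨0, hn⟩ := fun ξ => by
    rw [← ContinuousLinearMap.adjoint_inner_left, hf]; simp [PiLp.inner_apply]
  have := h.alexandrov hn hlam hLam hy hwy hM f (fun z hz => by
    obtain ⟨ξ, rfl, hξ⟩ := hM.cover z hz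
    rw [add_sub_cancel_left, hfM]
    exact (le_abs_self _).trans (hξ _)) ⟨0, hn⟩
  rw [hfM] at this
  simpa using this

/-- A point of definite relative depth is in a balanced position: it can be moved by a fixed fraction of any
difference vector of `Z` without leaving `Z`. A functional separating an escaping point from `Z`, normalized to lie in
the polar body of `Z - y`, has frame coordinates bounded by a constant `C`, so the escaping vector cannot be short. -/
lemma exists_balance (hn : 1 ≤ n) (hlam : 0 < lam) (hLam : 0 < Lam) {θ : ℝ} (hθ : 0 < θ) :
    ∃ c > (0:ℝ), ∀ (Z : Set (Eucl n)) (w : Eucl n → ℝ) (G : Eucl n → Eucl n)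
      (B : Eucl n → Eucl n →L[ℝ] Eucl n), MADomain lam Lam Z w G B → ∀ d > 0, (∀ z ∈ Z, -d ≤ w z) →
      ∀ y ∈ Z, w y ≤ -(θ * d) → ∀ z₁ ∈ Z, ∀ z₂ ∈ Z, ∀ t, 0 ≤ t → t ≤ c → y + t • (z₁ - z₂) ∈ Z := by
  have hn' : (0:ℝ) < n := by exact_mod_cast hn
  set C : ℝ := (160 * n ^ 3) ^ n * Lam / (lam * θ ^ n) with hC
  have hCpos : 0 < C := by positivity
  refine ⟨1 / (4 * n * C), by positivity, ?_⟩
  intro Z w G B h d hd hw y hy hwy z₁ hz₁ z₂ hz₂ t ht htc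
  by_contra hout
  have hwy0 : w y < 0 := by have : 0 < θ * d := by positivity
                            linarith
  obtain ⟨M, hM⟩ := exists_frame h.isOpen h.convex h.bounded hy
  have hdM := h.det_frame_le hn hlam hd hw hM
  obtain ⟨f0, hf0⟩ := geometric_hahn_banach_open_point h.convex h.isOpen hout
  obtain ⟨f1, hf1⟩ := (InnerProductSpace.toDual ℝ (Eucl n)).surjective f0
  have hf1' : ∀ v, f0 v = ⟪f1, v⟫ := fun v => by rw [← hf1, InnerProductSpace.toDual_apply_apply]
  set s := ⟪f1, t • (z₁ - z₂)⟫ with hs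
  have hsz : ∀ z ∈ Z, ⟪f1, z - y⟫ < s := fun z hz => by
    have := hf0 z hz
    rw [hf1', hf1', inner_add_right] at this
    rw [inner_sub_right]; linarith
  have hspos : 0 < s := by simpa using hsz y hy
  have hpol : ∀ z ∈ Z, ⟪s⁻¹ • f1, z - y⟫ ≤ 1 := fun z hz => by
    rw [real_inner_smul_left, inv_mul_le_iff₀ hspos, mul_one]; exact (hsz z hz).le
  have hK : ∀ i, |⟪s⁻¹ • f1, M (EuclideanSpace.single i 1)⟫| ≤ C := fun i => by
    have h1 := h.alexandrov hn hlam hLam hy hwy0 hM (s⁻¹ • f1) hpol i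
    have h2 : (θ * d) ^ n ≤ (- w y) ^ n := pow_le_pow_left₀ (by positivity) (by linarith) n
    rw [hC, le_div_iff₀ (by positivity)]
    set F := |⟪s⁻¹ • f1, M (EuclideanSpace.single i 1)⟫|
    have h3 : (θ * d) ^ n * F ≤ (4 * n) ^ n * Lam * |M.det| ^ 2 :=
      (mul_le_mul_of_nonneg_right h2 (abs_nonneg _)).trans h1
    have h4 : lam * ((θ * d) ^ n * F) ≤ (4 * n) ^ n * Lam * ((40 * n ^ 2 : ℝ) ^ n * d ^ n) := by
      calc _ ≤ lam * ((4 * n) ^ n * Lam * |M.det| ^ 2) := by gcongr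
        _ = (4 * n) ^ n * Lam * (lam * |M.det| ^ 2) := by ring
        _ ≤ _ := mul_le_mul_of_nonneg_left hdM (by positivity)
    have h5 : (160 * (n:ℝ) ^ 3) ^ n = (4 * n) ^ n * (40 * n ^ 2 : ℝ) ^ n := by rw [← mul_pow]; ring
    rw [h5]
    refine le_of_mul_le_mul_right ?_ (pow_pos hd n)
    calc _ = lam * ((θ * d) ^ n * F) := by rw [mul_pow]; ring
      _ ≤ _ := h4
      _ = _ := by ring
  obtain ⟨ξ₁, e₁, hξ₁⟩ := hM.cover z₁ hz₁
  obtain ⟨ξ₂, e₂, hξ₂⟩ := hM.cover z₂ hz₂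
  have hone : t * ⟪s⁻¹ • f1, z₁ - z₂⟫ = 1 := by
    rw [← inner_smul_right, real_inner_smul_left, ← hs, inv_mul_cancel₀ hspos.ne']
  have hexp : z₁ - z₂ = ∑ i, (ξ₁ i - ξ₂ i) • M (EuclideanSpace.single i 1) := by
    have : z₁ - z₂ = M (ξ₁ - ξ₂) := by rw [e₁, e₂, map_sub]; abel
    have h2 : ξ₁ - ξ₂ = ∑ i, (ξ₁ i - ξ₂ i) • EuclideanSpace.single i (1:ℝ) := by
      simpa using ((EuclideanSpace.basisFun (Fin n) ℝ).toBasis.sum_repr (ξ₁ - ξ₂)).symm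
    rw [this]
    conv_lhs => rw [h2, map_sum]
    simp
  have hle : ⟪s⁻¹ • f1, z₁ - z₂⟫ ≤ 2 * n * C := by
    rw [hexp, inner_sum]
    calc _ ≤ ∑ i : Fin n, 2 * C := Finset.sum_le_sum fun i _ => by
          rw [inner_smul_right]
          refine (le_abs_self _).trans ?_
          rw [abs_mul]
          have := abs_sub (ξ₁ i) (ξ₂ i)
          have := hξ₁ i
          have := hξ₂ i
          exact mul_le_mul (by linarith) (hK i) (abs_nonneg _) (by norm_num)
      _ = _ := by simp; ring
  have : t * ⟪s⁻¹ • f1, z₁ - z₂⟫ ≤ 1 / (4 * n * C) * (2 * n * C) :=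
    (mul_le_mul_of_nonneg_left hle ht).trans (by gcongr)
  rw [hone] at this
  have h6 : 1 / (4 * n * C) * (2 * n * C) = 1 / 2 := by field_simp; norm_num
  rw [h6] at this
  norm_num at this

end MALevel

/-! ### Uniform bounds and strict convexity on normalized domains -/

namespace MALevel

open scoped RealInnerProductSpace
variable {n : ℕ}
variable {lam Lam : ℝ} {Z : Set (Eucl n)} {w : Eucl n → ℝ} {G : Eucl n → Eucl n}
    {B : Eucl n → Eucl n →L[ℝ] Eucl n}

lemma ball_subset_of_mem_smul {U : Set (Eucl n)} (hc : Convex ℝ U) (h1 : ball 0 1 ⊆ U) {x : Eucl n}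
    (hx : x ∈ (3/4 : ℝ) • U) : ball x (1/4) ⊆ U := by
  obtain ⟨v, hv, rfl⟩ := hx
  intro y hy
  have h2 : (4:ℝ) • (y - (3/4:ℝ) • v) ∈ U := h1 (by
    rw [mem_ball_zero_iff, norm_smul]
    rw [mem_ball, dist_eq_norm] at hy
    norm_num at hy ⊢
    linarith)
  have := hc hv h2 (a := 3/4) (b := 1/4) (by norm_num) (by norm_num) (by norm_num)
  convert this using 1
  module

/-- Universal two-sided bounds for the depth of `u` and a bound for its gradient at points of distance at
least `1/4` from `∂U`. -/
lemma exists_bounds (hn : 1 ≤ n) (hlam : 0 < lam) (hLam : 0 < Lam) :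
    ∃ C > (0:ℝ), ∃ k > (0:ℝ), ∀ (U : Set (Eucl n)) (u : Eucl n → ℝ) (G : Eucl n → Eucl n)
      (B : Eucl n → Eucl n →L[ℝ] Eucl n), MADomain lam Lam U u G B → ball 0 1 ⊆ U → U ⊆ ball 0 n →
      (∀ y ∈ U, -C ≤ u y) ∧ ∀ x, ball x (1/4) ⊆ U → u x ≤ -k ∧ ‖G x‖ ≤ 8 * C := by
  have hn' : (1:ℝ) ≤ n := by exact_mod_cast hn
  have hn0 : (0:ℝ) < n := by linarith
  set V : ℝ := (volume (ball (0 : Eucl n) n)).toReal with hV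
  set v : ℝ := (volume (ball (0 : Eucl n) 1)).toReal with hv
  have hvpos : 0 < v := ENNReal.toReal_pos (measure_ball_pos _ _ one_pos).ne' measure_ball_lt_top.ne
  set C : ℝ := 1 + (4 * n) ^ n * Lam * (n ^ n * V) ^ 2 with hC
  have hC1 : 1 ≤ C := by rw [hC]; linarith [show 0 ≤ (4 * n:ℝ) ^ n * Lam * (n ^ n * V) ^ 2 by positivity]
  set c : ℝ := min 1 (lam * (v / 4 ^ n) ^ 2 / (2 * (40 * n ^ 2) ^ n)) with hc
  have hcpos : 0 < c := by positivity
  refine ⟨C, by linarith, c / (16 * n), by positivity, ?_⟩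
  intro U u G B h hU1 hUn
  have h0 : (0 : Eucl n) ∈ U := hU1 (mem_ball_self one_pos)
  have hlow : ∀ y ∈ U, -C ≤ u y := by
    intro y hy
    by_contra! hlt
    obtain ⟨M, hM⟩ := exists_frame h.isOpen h.convex h.bounded hy
    have h1 := h.pow_le_det hn hlam hLam hy (by linarith) hM
    have h2 : |M.det| ≤ n ^ n * V := by
      have h3 := (hM.le_volume hn).trans (measure_mono hUn)
      rw [ENNReal.ofReal_le_iff_le_toReal measure_ball_lt_top.ne, ← hV, div_pow, one_pow, div_mul_eq_mul_div, one_mul,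
        div_le_iff₀ (by positivity)] at h3
      linarith
    have h3 : (4 * n:ℝ) ^ n * Lam * |M.det| ^ 2 ≤ C - 1 := by
      rw [hC, add_sub_cancel_left]; gcongr
    have h4 : C ≤ C ^ n := le_self_pow₀ hC1 (by omega)
    have h5 : C ^ n ≤ (-u y) ^ n := pow_le_pow_left₀ (by linarith) (by linarith) n
    linarith
  -- if `u ≥ -c` throughout, the volume of `U` would be smaller than that of the unit ball
  have hdeep : ∃ z ∈ U, u z < -c := by
    by_contra! hall
    obtain ⟨M, hM⟩ := exists_frame h.isOpen h.convex h.bounded h0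
    have h1 := h.det_frame_le hn hlam hcpos hall hM
    have h2 : v / 4 ^ n ≤ |M.det| := by
      have h3 := (measure_mono hU1).trans hM.volume_le
      rw [ENNReal.le_ofReal_iff_toReal_le measure_ball_lt_top.ne (by positivity), ← hv] at h3
      rw [div_le_iff₀ (by positivity)]; linarith
    have h3 : lam * (v / 4 ^ n) ^ 2 ≤ lam * |M.det| ^ 2 := by gcongr
    have h4 : c ^ n ≤ c := pow_le_of_le_one hcpos.le (min_le_left _ _) (by omega)
    have h5 : c ≤ lam * (v / 4 ^ n) ^ 2 / (2 * (40 * n ^ 2) ^ n) := min_le_right _ _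
    rw [le_div_iff₀ (by positivity)] at h5
    have h6 : (40 * n ^ 2 : ℝ) ^ n * c ^ n ≤ (40 * n ^ 2) ^ n * c := by gcongr
    have h7 : 0 < lam * (v / 4 ^ n) ^ 2 := by positivity
    nlinarith
  refine ⟨hlow, fun x hx => ?_⟩
  have hxU : x ∈ U := hx (mem_ball_self (by norm_num))
  constructor
  · obtain ⟨z, hz, hzc⟩ := hdeep
    have hd : ‖x - z‖ < 2 * n := by
      have h1 := hUn hxU
      have h2 := hUn hz
      rw [mem_ball_zero_iff] at h1 h2
      linarith [norm_sub_le x z]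
    have hp : x + (1 / (8 * n) : ℝ) • (x - z) ∈ U := hx (by
      rw [mem_ball, dist_eq_norm, add_sub_cancel_left, norm_smul, Real.norm_of_nonneg (by positivity),
        div_mul_eq_mul_div, one_mul, div_lt_iff₀ (by positivity)]
      linarith)
    have h1 := h.tangent x hxU _ hp
    have h2 := h.tangent x hxU z hz
    have h3 := h.nonpos _ hp
    rw [add_sub_cancel_left, inner_smul_right] at h1
    have h4 : ⟪G x, z - x⟫ = -⟪G x, x - z⟫ := by rw [← inner_neg_right, neg_sub]
    rw [h4] at h2
    have h5 : u x + 1 / (8 * n) * (u x - u z) ≤ 0 := by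
      have : 1 / (8 * n : ℝ) * (u x - u z) ≤ 1 / (8 * n) * ⟪G x, x - z⟫ := by
        gcongr; linarith
      linarith
    have h6 : u x * (8 * n + 1) ≤ u z := by
      have h6 : u x + 1 / (8 * n) * (u x - u z) = (u x * (8 * n + 1) - u z) / (8 * n) := by field_simp; ring
      rw [h6, div_le_iff₀ (by positivity)] at h5
      linarith
    rw [← neg_div, le_div_iff₀ (by positivity)]
    have h7 := h.nonpos _ hxU
    nlinarith
  · rcases eq_or_ne (G x) 0 with h0 | h0
    · rw [h0, norm_zero]; linarith
    have hg : 0 < ‖G x‖ := norm_pos_iff.2 h0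
    have hp : x + (1 / (8 * ‖G x‖) : ℝ) • G x ∈ U := hx (by
      rw [mem_ball, dist_eq_norm, add_sub_cancel_left, norm_smul, Real.norm_of_nonneg (by positivity),
        div_mul_eq_mul_div, one_mul, div_lt_iff₀ (by positivity)]
      linarith)
    have h1 := h.tangent x hxU _ hp
    have h2 := hlow x hxU
    have h3 := h.nonpos _ hp
    rw [add_sub_cancel_left, inner_smul_right, real_inner_self_eq_norm_sq] at h1
    have h4 : 1 / (8 * ‖G x‖) * ‖G x‖ ^ 2 = ‖G x‖ / 8 := by field_simp
    rw [h4] at h1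
    linarith

/-- Uniform strict convexity: the tangent planes of `u` at interior points stay uniformly below the boundary values.

Let `ℓ` be the tangent plane at `x` and suppose that `ℓ z` is very close to `0` for some `z ∈ U`. The set
`{u < (1 - σ) ℓ}` has depth at most `C₁ σ`, and a point of the ray from `z` through `x` at which `u ≤ (1 - σ/2) ℓ`
is deep in it, so by balance the ray can be prolonged inside this set by the factor `1 + c`. There `u < (1 - σ) ℓ`,
and the step can be repeated with `2σ` in place of `σ`. Starting with `σ = 2⁻ᴺ` this allows `N` steps, after which
`ℓ`, which decreases linearly along the ray, is below its minimum `-C₁` over `U`. -/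
lemma exists_strict (hn : 1 ≤ n) (hlam : 0 < lam) (hLam : 0 < Lam) :
    ∃ h₀ > (0:ℝ), ∀ (U : Set (Eucl n)) (u : Eucl n → ℝ) (G : Eucl n → Eucl n)
      (B : Eucl n → Eucl n →L[ℝ] Eucl n), MADomain lam Lam U u G B → ball 0 1 ⊆ U → U ⊆ ball 0 n →
      ∀ x, ball x (1/4) ⊆ U → ∀ z ∈ U, u x + ⟪G x, z - x⟫ ≤ -h₀ := by
  have hn' : (1:ℝ) ≤ n := by exact_mod_cast hn
  obtain ⟨C, hC, k₀, hk₀, hb⟩ := exists_bounds (n := n) hn hlam hLam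
  set C₁ : ℝ := C + 8 * C * (2 * n) with hC₁
  have hC₁pos : 0 < C₁ := by positivity
  obtain ⟨c, hc, hbal⟩ := exists_balance (n := n) hn hlam hLam (θ := k₀ / (2 * C₁)) (by positivity)
  obtain ⟨N, hN⟩ := pow_unbounded_of_one_lt (4 * C₁ / k₀) (show 1 < 1 + c by linarith)
  refine ⟨(1/2) ^ N * (k₀ / 2), by positivity, ?_⟩
  intro U u G B h hU1 hUn x hx z hz
  by_contra! hlt
  obtain ⟨-, hb2⟩ := hb U u G B h hU1 hUn
  obtain ⟨hux, hgx⟩ := hb2 x hx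
  have hlow := (hb U u G B h hU1 hUn).1
  have hxU : x ∈ U := hx (mem_ball_self (by norm_num))
  have hl1 : ∀ y ∈ U, -C₁ ≤ u x + ⟪G x, y - x⟫ := fun y hy => by
    have h1 := abs_real_inner_le_norm (G x) (y - x)
    have h2 : ‖y - x‖ ≤ 2 * n := by
      have h1 := hUn hxU
      have h2 := hUn hy
      rw [mem_ball_zero_iff] at h1 h2
      linarith [norm_sub_le y x]
    have h3 : ‖G x‖ * ‖y - x‖ ≤ 8 * C * (2 * n) := by gcongr
    have := hlow x hxU
    have := neg_abs_le ⟪G x, y - x⟫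
    linarith
  have hl0 : ∀ y ∈ U, u x + ⟪G x, y - x⟫ ≤ 0 := fun y hy => (h.tangent x hxU y hy).trans (h.nonpos y hy)
  set H : ℝ := -(u x + ⟪G x, z - x⟫) with hH
  have hH0 : 0 ≤ H := by linarith [hl0 z hz]
  set a : ℝ := ⟪G x, z - x⟫ with ha
  have hhalf : (1/2:ℝ) ^ N ≤ 1 := pow_le_one₀ (by norm_num) (by norm_num)
  have hak : k₀ / 2 < a := by
    have : (1/2:ℝ) ^ N * (k₀ / 2) ≤ 1 * (k₀ / 2) := by gcongr
    linarith
  -- the ray from `z` (at `t = 0`) through `x` (at `t = 1`)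
  set p : ℝ → Eucl n := fun t => z + t • (x - z) with hp
  have hlp : ∀ t, u x + ⟪G x, p t - x⟫ = -(H + a * t) := fun t => by
    have : p t - x = (1 - t) • (z - x) := by simp only [hp]; module
    rw [this, inner_smul_right, ← ha]; linarith
  have hmid : p (1/2) ∈ U := by
    have := h.convex hz hxU (a := 1/2) (b := 1/2) (by norm_num) (by norm_num) (by norm_num)
    convert this using 1
    simp only [hp]; module
  have hmidu : u (p (1/2)) + H / 2 + a / 2 ≤ 0 := by
    have h1 := h.tangent _ hmid z hz
    have h2 := h.tangent _ hmid x hxU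
    have h3 : z - p (1/2) = -(x - p (1/2)) := by simp only [hp]; module
    rw [h3, inner_neg_right] at h1
    have := h.nonpos z hz
    linarith
  -- the point at step `j` is obtained by dilating `x` from the midpoint `p (1/2)` by the factor `(1 + c) ^ j`
  have key : ∀ j ≤ N, p (1/2 + (1 + c) ^ j / 2) ∈ U ∧
      u (p (1/2 + (1 + c) ^ j / 2)) + (H + a * (1/2 + (1 + c) ^ j / 2)) ≤
        (1/2) ^ (N - j) * (H + a * (1/2 + (1 + c) ^ j / 2)) / 2 := by
    intro j
    induction j with
    | zero =>
      intro _
      have : p (1/2 + (1 + c) ^ 0 / 2) = x := by simp only [hp]; norm_num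
      rw [this]
      refine ⟨hxU, ?_⟩
      have h1 : H + a * (1/2 + (1 + c) ^ 0 / 2) = - u x := by rw [pow_zero]; linarith
      rw [h1]
      have : 0 ≤ (1/2:ℝ) ^ (N - 0) * -u x / 2 := by
        have : 0 ≤ - u x := by linarith
        positivity
      linarith
    | succ j ih =>
      intro hj
      obtain ⟨hpU, hphi⟩ := ih (by omega)
      set t := 1/2 + (1 + c) ^ j / 2 with ht
      have ht1 : 1 ≤ t := by
        have : 1 ≤ (1 + c) ^ j := one_le_pow₀ (by linarith)
        linarith
      set σ : ℝ := (1/2) ^ (N - j) with hσ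
      have hσ0 : 0 < σ := by positivity
      have hσ1 : σ ≤ 1 := pow_le_one₀ (by norm_num) (by norm_num)
      have hσN : (1/2:ℝ) ^ N ≤ σ := pow_le_pow_of_le_one (by norm_num) (by norm_num) (by omega)
      have haff : ∀ y, (1 - σ) * (u x - ⟪G x, x⟫) + ⟪(1 - σ) • G x, y⟫ = (1 - σ) * (u x + ⟪G x, y - x⟫) := fun y => by
        rw [real_inner_smul_left, inner_sub_right]; ring
      have hsec := h.cut ((1 - σ) * (u x - ⟪G x, x⟫)) ((1 - σ) • G x) (fun y hy => by
        rw [haff]; exact mul_nonpos_of_nonneg_of_nonpos (by linarith) (hl0 y hy))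
      simp only [haff] at hsec
      have hat : a ≤ a * t := by nlinarith
      have hkt : k₀ ≤ H + a * t := by linarith
      have hσk : σ * k₀ ≤ σ * (H + a * t) := by gcongr
      have hσk0 : 0 < σ * k₀ := by positivity
      have h1 : p t ∈ {y ∈ U | u y < (1 - σ) * (u x + ⟪G x, y - x⟫)} := by
        refine ⟨hpU, ?_⟩
        rw [hlp]; linarith
      have h2 : p (1/2) ∈ {y ∈ U | u y < (1 - σ) * (u x + ⟪G x, y - x⟫)} := by
        refine ⟨hmid, ?_⟩
        rw [hlp]
        have h3 : (1/2:ℝ) ^ N * (k₀ / 2) ≤ σ * a := by gcongr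
        have h4 : 0 ≤ σ * H := by positivity
        linarith
      have h3 := hbal _ _ _ _ hsec (σ * C₁) (by positivity) (fun y hy => by
        have h4 := h.tangent x hxU y hy.1
        have h5 := mul_le_mul_of_nonneg_left (hl1 y hy.1) hσ0.le
        linarith) (p t) h1 (by
        rw [hlp]
        have : k₀ / (2 * C₁) * (σ * C₁) = σ * k₀ / 2 := by field_simp
        rw [this]; linarith) (p t) h1 (p (1/2)) h2 c hc.le le_rfl
      have h4 : p t + c • (p t - p (1/2)) = p (1/2 + (1 + c) ^ (j+1) / 2) := by
        simp only [hp, ht, pow_succ]; module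
      rw [h4] at h3
      refine ⟨h3.1, ?_⟩
      have h5 := h3.2
      rw [hlp] at h5
      have h6 : (1/2:ℝ) ^ (N - (j+1)) = 2 * σ := by
        rw [hσ, show N - j = (N - (j+1)) + 1 by omega, pow_succ]; ring
      rw [h6]; linarith
  obtain ⟨h1, -⟩ := key N le_rfl
  have h2 := hl1 _ h1
  rw [hlp] at h2
  rw [div_lt_iff₀ hk₀] at hN
  have h3 : k₀ / 2 * (1 + c) ^ N ≤ a * (1 + c) ^ N := by gcongr
  nlinarith

end MALevel

/-! ### Geometry of sections -/

namespace MALevel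

open scoped RealInnerProductSpace
variable {n : ℕ}
variable {lam Lam : ℝ} {Z : Set (Eucl n)} {w : Eucl n → ℝ} {G : Eucl n → Eucl n}
    {B : Eucl n → Eucl n →L[ℝ] Eucl n}

/-- The excess of `u` at `y` over its tangent plane at `x`, where `G` is the gradient of `u`. -/
noncomputable def excess (u : Eucl n → ℝ) (G : Eucl n → Eucl n) (x y : Eucl n) : ℝ := u y - u x - ⟪G x, y - x⟫

/-- The section of `u` with centre `x` and height `h`. -/
def sec (U : Set (Eucl n)) (u : Eucl n → ℝ) (G : Eucl n → Eucl n) (x : Eucl n) (h : ℝ) : Set (Eucl n) :=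
  {y ∈ U | excess u G x y < h}

/-- `u` solves the Monge–Ampère inequality on `U`, and every section of height at most `h₀` centred at distance at
least `1/4` from `∂U` is itself the domain of a solution vanishing on its boundary, and is balanced with constant `c`
around the points of at most half its height. -/
structure Balanced (lam Lam h₀ c : ℝ) (U : Set (Eucl n)) (u : Eucl n → ℝ) (G : Eucl n → Eucl n)
    (B : Eucl n → Eucl n →L[ℝ] Eucl n) : Prop where
  dom : MADomain lam Lam U u G B
  sect : ∀ x, ball x (1/4) ⊆ U → ∀ h, h ≤ h₀ →
    MADomain lam Lam (sec U u G x h) (fun y => excess u G x y - h) (fun y => G y - G x) B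
  bal : ∀ x, ball x (1/4) ⊆ U → ∀ h, 0 < h → h ≤ h₀ → ∀ y ∈ sec U u G x h, excess u G x y ≤ h / 2 →
    ∀ z₁ ∈ sec U u G x h, ∀ z₂ ∈ sec U u G x h, ∀ t, 0 ≤ t → t ≤ c → y + t • (z₁ - z₂) ∈ sec U u G x h

lemma exists_balanced (hn : 1 ≤ n) (hlam : 0 < lam) (hLam : 0 < Lam) :
    ∃ h₀ > (0:ℝ), ∃ c > (0:ℝ), c ≤ 1 ∧ ∀ (U : Set (Eucl n)) (u : Eucl n → ℝ) (G : Eucl n → Eucl n)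
      (B : Eucl n → Eucl n →L[ℝ] Eucl n), MADomain lam Lam U u G B → ball 0 1 ⊆ U → U ⊆ ball 0 n →
      Balanced lam Lam h₀ c U u G B := by
  obtain ⟨h₀, hh₀, hst⟩ := exists_strict (n := n) hn hlam hLam
  obtain ⟨c, hc, hbal⟩ := exists_balance (n := n) hn hlam hLam (θ := 1 / 2) (by norm_num)
  refine ⟨h₀, hh₀, min c 1, by positivity, min_le_right _ _, ?_⟩
  intro U u G B hM hU1 hUn
  have hsect : ∀ x, ball x (1/4) ⊆ U → ∀ h, h ≤ h₀ →
    MADomain lam Lam (sec U u G x h) (fun y => excess u G x y - h) (fun y => G y - G x) B := by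
    intro x hx h hh
    have := hM.cut (u x - ⟪G x, x⟫ + h) (G x) (fun z hz => by
      have := hst U u G B hM hU1 hUn x hx z hz
      rw [inner_sub_right] at this
      linarith)
    convert this using 1
    · ext y
      simp only [sec, excess, inner_sub_right, mem_ofPred_eq]
      refine and_congr_right fun _ => ?_
      constructor <;> intro _ <;> linarith
    · ext y
      simp only [excess, inner_sub_right]
      ring
  refine ⟨hM, hsect, ?_⟩
  intro x hx h hh hh0 y hy hyh z₁ hz₁ z₂ hz₂ t ht htc
  refine hbal _ _ _ _ (hsect x hx h hh0) h hh (fun z hz => ?_) y hy ?_ z₁ hz₁ z₂ hz₂ t ht (htc.trans (min_le_left _ _))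
  · have := hM.tangent x (hx (mem_ball_self (by norm_num))) z hz.1
    simp only [excess]
    linarith
  · linarith

variable {h₀ c : ℝ} {U : Set (Eucl n)} {u : Eucl n → ℝ}

lemma Balanced.excess_nonneg (E : Balanced lam Lam h₀ c U u G B) {x y : Eucl n} (hx : x ∈ U) (hy : y ∈ U) :
    0 ≤ excess u G x y := by
  have := E.dom.tangent x hx y hy
  simp only [excess]; linarith

lemma excess_self (x : Eucl n) : excess u G x x = 0 := by simp [excess]

lemma self_mem_sec {x : Eucl n} (hx : x ∈ U) {h : ℝ} (hh : 0 < h) : x ∈ sec U u G x h :=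
  ⟨hx, by rwa [excess_self]⟩

lemma sec_mono {x : Eucl n} {h k : ℝ} (hk : h ≤ k) : sec U u G x h ⊆ sec U u G x k :=
  fun _ hy => ⟨hy.1, hy.2.trans_le hk⟩

/-- Dilating a section towards its centre reduces the height by at least the same factor. -/
lemma Balanced.contract (E : Balanced lam Lam h₀ c U u G B) {x y : Eucl n} (hx : x ∈ U) {h : ℝ}
    (hy : y ∈ sec U u G x h) {s : ℝ} (hs : 0 < s) (hs1 : s ≤ 1) : x + s • (y - x) ∈ sec U u G x (s * h) := by
  have hz : x + s • (y - x) ∈ U := by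
    have := E.dom.convex hx hy.1 (a := 1 - s) (b := s) (by linarith) hs.le (by ring)
    convert this using 1; module
  refine ⟨hz, ?_⟩
  have h1 := E.dom.tangent _ hz x hx
  have h2 := E.dom.tangent _ hz y hy.1
  have e1 : x - (x + s • (y - x)) = (-s) • (y - x) := by module
  have e2 : y - (x + s • (y - x)) = (1 - s) • (y - x) := by module
  have h3 := hy.2
  rw [e1, inner_smul_right] at h1
  rw [e2, inner_smul_right] at h2
  simp only [excess] at h3 ⊢
  rw [add_sub_cancel_left, inner_smul_right]
  have h4 := mul_lt_mul_of_pos_left h3 hs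
  have h5 := mul_le_mul_of_nonneg_left h1 (show 0 ≤ 1 - s by linarith)
  have h6 := mul_le_mul_of_nonneg_left h2 hs.le
  linarith

/-- Dual form of balance: the increment of the gradient is bounded on difference vectors of the section, because `y`
can be moved by `c` times such a vector inside the section of height `2 * h`. -/
lemma Balanced.grad_le (hc : 0 < c) (E : Balanced lam Lam h₀ c U u G B) {x : Eucl n} (hx : ball x (1/4) ⊆ U)
    {h : ℝ} (hh : 0 < h) (hh0 : 2 * h ≤ h₀) {y z₁ z₂ : Eucl n} (hy : y ∈ sec U u G x h)
    (hz₁ : z₁ ∈ sec U u G x (2 * h)) (hz₂ : z₂ ∈ sec U u G x (2 * h)) :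
    ⟪G y - G x, z₁ - z₂⟫ ≤ 2 * h / c := by
  have h1 := E.bal x hx (2 * h) (by linarith) hh0 y (sec_mono (by linarith) hy) (by linarith [hy.2]) z₁ hz₁ z₂ hz₂ c
    hc.le le_rfl
  have hxU : x ∈ U := hx (mem_ball_self (by norm_num))
  have h2 := E.dom.tangent y hy.1 _ h1.1
  have h3 := h1.2
  have h4 := E.excess_nonneg hxU hy.1
  rw [add_sub_cancel_left, inner_smul_right] at h2
  simp only [excess] at h3 h4
  have h5 : y + c • (z₁ - z₂) - x = (y - x) + c • (z₁ - z₂) := by module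
  rw [h5, inner_add_right, inner_smul_right] at h3
  rw [le_div_iff₀ hc, inner_sub_left]
  linarith

/-- Sections shrink geometrically as the height is halved. -/
lemma Balanced.shrink (hc : 0 < c) (E : Balanced lam Lam h₀ c U u G B) {x : Eucl n} (hx : ball x (1/4) ⊆ U)
    (k : ℕ) {h : ℝ} (hh : 0 < h) (hh0 : h ≤ h₀) {y : Eucl n} (hy : y ∈ sec U u G x (h / 2 ^ k)) :
    x + (1 + c) ^ k • (y - x) ∈ sec U u G x h := by
  have hxU : x ∈ U := hx (mem_ball_self (by norm_num))
  induction k generalizing y with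
  | zero => simpa using hy
  | succ k ih =>
    have h1 : h / 2 ^ (k + 1) = h / 2 ^ k / 2 := by rw [pow_succ]; field_simp
    rw [h1] at hy
    have hk : 0 < h / 2 ^ k := by positivity
    have h2 : h / 2 ^ k ≤ h := div_le_self hh.le (one_le_pow₀ (by norm_num))
    have h3 := ih (E.bal x hx (h / 2 ^ k) hk (h2.trans hh0) y (sec_mono (by linarith) hy) hy.2.le y
      (sec_mono (by linarith) hy) x (self_mem_sec hxU hk) c hc.le le_rfl)
    convert h3 using 1
    rw [pow_succ]; module

/-- Engulfing: if a small section around `y` meets a small section of comparable height around `x`, then `x` lies in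
the enlarged section around `y`. At a common point `v`, the dual balance estimate at `y` and at `x` bounds the
excesses over the tangent plane at `v` of both `y` and `x`; a third application, at `v`, gives the claim. -/
lemma Balanced.engulf (hc : 0 < c) (hc1 : c ≤ 1) (E : Balanced lam Lam h₀ c U u G B) {x y v : Eucl n}
    (hx : ball x (1/4) ⊆ U) (hy : ball y (1/4) ⊆ U) (hv : ball v (1/4) ⊆ U) {h : ℝ} (hh : 0 < h) (hh0 : h ≤ h₀)
    (h1 : v ∈ sec U u G y (c ^ 2 / 16 * h)) (h2 : v ∈ sec U u G x (2 * (c ^ 2 / 16 * h))) :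
    x ∈ sec U u G y h := by
  have hxU : x ∈ U := hx (mem_ball_self (by norm_num))
  have hyU : y ∈ U := hy (mem_ball_self (by norm_num))
  set k := c ^ 2 / 16 * h with hk
  have hkpos : 0 < k := by positivity
  have hc2 : c ^ 2 ≤ 1 := pow_le_one₀ hc.le hc1
  have hkh : 16 * k ≤ h := by rw [hk]; nlinarith
  have g1 := E.grad_le hc hy hkpos (by linarith) h1 (sec_mono (by linarith) h1) (self_mem_sec hyU (by linarith))
  have g2 := E.grad_le hc hx (h := 2 * k) (by linarith) (by linarith) h2 (sec_mono (by linarith) h2)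
    (self_mem_sec hxU (by linarith))
  have n1 := E.excess_nonneg hyU h1.1
  have n2 := E.excess_nonneg hxU h1.1
  have hkc : k / c = c * h / 16 := by rw [hk]; field_simp
  have e2 : 2 * (2 * k) / c = 4 * (c * h / 16) := by rw [← hkc]; ring
  have e1 : 2 * k / c = 2 * (c * h / 16) := by rw [← hkc]; ring
  set m := c * h / 16 with hm
  have hmpos : 0 < m := by positivity
  rw [e1] at g1
  rw [e2] at g2
  have a1 : excess u G v y ≤ 2 * m := by
    have : excess u G v y + excess u G y v = ⟪G v - G y, v - y⟫ := by
      simp only [excess, inner_sub_left, inner_sub_right]; ring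
    linarith
  have a2 : excess u G v x ≤ 4 * m := by
    have : excess u G v x + excess u G x v = ⟪G v - G x, v - x⟫ := by
      simp only [excess, inner_sub_left, inner_sub_right]; ring
    linarith
  have hmh : 16 * m ≤ h := by rw [hm]; nlinarith
  have g3 := E.grad_le hc hv (h := 5 * m) (by linarith) (by linarith) (y := y) (z₁ := y) (z₂ := x)
    ⟨hyU, by linarith⟩ ⟨hyU, by linarith⟩ ⟨hxU, by linarith⟩
  have e3 : 2 * (5 * m) / c = 10 * (h / 16) := by rw [hm]; field_simp; norm_num
  rw [e3] at g3
  have n3 := E.excess_nonneg h1.1 hyU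
  refine ⟨hxU, ?_⟩
  have : excess u G y x = excess u G v x - excess u G v y + ⟪G y - G v, y - x⟫ := by
    simp only [excess, inner_sub_left, inner_sub_right]; ring
  linarith

/-- Sections of smaller height are compactly contained in those of larger height: on the boundary of each section the
excess equals the height. -/
lemma Balanced.closure_sec_subset (E : Balanced lam Lam h₀ c U u G B) {x : Eucl n} (hx : ball x (1/4) ⊆ U)
    {h k : ℝ} (hhk : h < k) (hk : k ≤ h₀) : closure (sec U u G x h) ⊆ sec U u G x k := by
  intro z hz
  by_contra hzk
  have hzh : z ∉ sec U u G x h := fun hzh => hzk (sec_mono hhk.le hzh)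
  have fr : ∀ r ≤ h₀, z ∈ closure (sec U u G x r) → z ∉ sec U u G x r → excess u G x z = r := fun r hr h1 h2 => by
    have hs := E.sect x hx r hr
    have := hs.bdry z ⟨h1, by rwa [hs.isOpen.interior_eq]⟩
    linarith
  have := fr h (hhk.le.trans hk) hz hzh
  have := fr k hk (closure_mono (sec_mono hhk.le) hz) hzk
  linarith

/-- Sections are doubling. -/
lemma Balanced.volume_sec_le (E : Balanced lam Lam h₀ c U u G B) {x : Eucl n} (hx : x ∈ U) {h s : ℝ} (hs : 0 < s)
    (hs1 : s ≤ 1) : volume (sec U u G x h) ≤ ENNReal.ofReal ((1 / s) ^ n) * volume (sec U u G x (s * h)) := by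
  have hsub : sec U u G x h ⊆ AffineMap.homothety x (1 / s) '' sec U u G x (s * h) := by
    intro y hy
    refine ⟨_, E.contract hx hy hs hs1, ?_⟩
    rw [AffineMap.homothety_apply]
    simp only [vsub_eq_sub, vadd_eq_add, add_sub_cancel_left, smul_smul]
    rw [one_div_mul_cancel hs.ne']; simp
  refine (measure_mono hsub).trans ?_
  rw [Measure.addHaar_image_homothety, finrank_euclideanSpace_fin, abs_of_pos (by positivity)]

end MALevel

/-! ### Second derivatives along frame edges -/

namespace MALevel

open scoped RealInnerProductSpace
variable {n : ℕ}
variable {lam Lam : ℝ} {Z : Set (Eucl n)} {w : Eucl n → ℝ} {G : Eucl n → Eucl n}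
    {B : Eucl n → Eucl n →L[ℝ] Eucl n}
variable {h₀ c : ℝ} {U : Set (Eucl n)} {u : Eucl n → ℝ}

/-- Averaging over translates in the direction `e` reduces a volume integral to integrals over segments. -/
lemma lintegral_le_of_segments {F : Eucl n → ENNReal} (hF : Measurable F) (e : Eucl n) {S : Set (Eucl n)}
    (hS : MeasurableSet S) (K : ENNReal)
    (h : ∀ x, ∫⁻ t in Icc 0 c, F (x + t • e) ≤ S.indicator (fun _ => K) x) :
    ENNReal.ofReal c * ∫⁻ x, F x ≤ K * volume S := by
  calc ENNReal.ofReal c * ∫⁻ x, F x = ∫⁻ t in Icc 0 c, ∫⁻ x, F (x + t • e) := by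
        simp_rw [lintegral_add_right_eq_self]
        rw [lintegral_const, Measure.restrict_apply MeasurableSet.univ, univ_inter, Real.volume_Icc, sub_zero, mul_comm]
    _ = ∫⁻ x, ∫⁻ t in Icc 0 c, F (x + t • e) := by
        refine lintegral_lintegral_swap (Measurable.aemeasurable ?_)
        exact hF.comp (by fun_prop : Measurable fun p : ℝ × Eucl n => p.2 + p.1 • e)
    _ ≤ ∫⁻ x, S.indicator (fun _ => K) x := lintegral_mono h
    _ = _ := by rw [lintegral_indicator_const hS]

/-- Fundamental theorem of calculus for the gradient along a segment. -/
lemma MADomain.lintegral_segment (h : MADomain lam Lam Z w G B) (hc : 0 ≤ c) {x e : Eucl n}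
    (hx : ∀ t ∈ Icc 0 c, x + t • e ∈ Z) :
    ∫⁻ t in Icc 0 c, ENNReal.ofReal ⟪B (x + t • e) e, e⟫ = ENNReal.ofReal (⟪G (x + c • e) - G x, e⟫) := by
  have hcont : ContinuousOn (fun t : ℝ => ⟪B (x + t • e) e, e⟫) (Icc 0 c) := by
    have h1 : ContinuousOn (fun t : ℝ => B (x + t • e)) (Icc 0 c) :=
      h.contB.comp (by fun_prop) hx
    exact (h1.clm_apply continuousOn_const).inner continuousOn_const
  have hder : ∀ t ∈ uIcc 0 c, HasDerivAt (fun t : ℝ => ⟪G (x + t • e), e⟫) ⟪B (x + t • e) e, e⟫ t := by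
    intro t ht
    rw [uIcc_of_le hc] at ht
    have h1 : HasDerivAt (fun t : ℝ => x + t • e) e t := by
      simpa using ((hasDerivAt_id t).smul_const e).const_add x
    have h2 := (h.hess _ (hx t ht)).comp_hasDerivAt t h1
    simpa using h2.inner ℝ (hasDerivAt_const t e)
  have hint : IntervalIntegrable (fun t : ℝ => ⟪B (x + t • e) e, e⟫) volume 0 c :=
    ContinuousOn.intervalIntegrable (by rwa [uIcc_of_le hc])
  have := intervalIntegral.integral_eq_sub_of_hasDerivAt hder hint
  rw [intervalIntegral.integral_of_le hc, ← integral_Icc_eq_integral_Ioc] at this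
  rw [← ofReal_integral_eq_lintegral_ofReal, this]
  · simp [inner_sub_left]
  · exact hcont.integrableOn_Icc
  · exact (ae_restrict_iff' measurableSet_Icc).2 (Filter.Eventually.of_forall fun t ht => h.nonneg _ (hx t ht) e)

/-- The integral over a section of the second derivative along an edge of the frame is controlled by the height.
On every segment `x + [0, c] e` that meets the section, the integral is an increment of the gradient, bounded by the
dual balance estimate. -/
lemma Balanced.lintegral_edge_le (hc : 0 < c) (E : Balanced lam Lam h₀ c U u G B) {y : Eucl n}
    (hy : ball y (1/4) ⊆ U) {h : ℝ} (hh : 0 < h) (hh0 : 4 * h ≤ h₀) {e : Eucl n}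
    (he : y + e ∈ closure (sec U u G y h)) :
    ∫⁻ x in sec U u G y h, ENNReal.ofReal ⟪B x e, e⟫ ≤
      ENNReal.ofReal (8 * h / c ^ 2) * volume (sec U u G y (2 * h)) := by
  have hyU : y ∈ U := hy (mem_ball_self (by norm_num))
  have he2 : y + e ∈ sec U u G y (2 * h) := E.closure_sec_subset hy (by linarith) (by linarith) he
  have hy2 : y ∈ sec U u G y (2 * h) := self_mem_sec hyU (by linarith)
  have ho := (E.sect y hy h (by linarith)).isOpen
  have ho2 := (E.sect y hy (2 * h) (by linarith)).isOpen
  have hcont : ContinuousOn (fun x => ENNReal.ofReal ⟪B x e, e⟫) (sec U u G y h) := by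
    refine ENNReal.continuous_ofReal.comp_continuousOn ?_
    exact ((E.dom.contB.mono fun x hx => hx.1).clm_apply continuousOn_const).inner continuousOn_const
  rw [← lintegral_indicator ho.measurableSet]
  have hF : Measurable ((sec U u G y h).indicator fun x => ENNReal.ofReal ⟪B x e, e⟫) := by
    classical
    rw [← piecewise_eq_indicator]
    exact hcont.measurable_piecewise continuousOn_const ho.measurableSet
  have key := lintegral_le_of_segments hF e ho2.measurableSet (ENNReal.ofReal (8 * h / c)) (fun x => by
    by_cases hex : ∃ t ∈ Icc 0 c, x + t • e ∈ sec U u G y h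
    · obtain ⟨t, ht, hxt⟩ := hex
      have hall : ∀ s ∈ Icc 0 c, x + s • e ∈ sec U u G y (2 * h) := by
        intro s hs
        have hxt2 : x + t • e ∈ sec U u G y (2 * h) := sec_mono (by linarith) hxt
        rcases le_total t s with hts | hts
        · have := E.bal y hy (2 * h) (by linarith) (by linarith) _ hxt2 (by linarith [hxt.2]) _ he2 _ hy2 (s - t)
            (by linarith) (by linarith [hs.2, ht.1])
          convert this using 1; module
        · have := E.bal y hy (2 * h) (by linarith) (by linarith) _ hxt2 (by linarith [hxt.2]) _ hy2 _ he2 (t - s)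
            (by linarith) (by linarith [ht.2, hs.1])
          convert this using 1; module
      have hx0 : x ∈ sec U u G y (2 * h) := by simpa using hall 0 ⟨le_rfl, hc.le⟩
      rw [indicator_of_mem hx0]
      calc _ ≤ ∫⁻ t in Icc 0 c, ENNReal.ofReal ⟪B (x + t • e) e, e⟫ :=
            lintegral_mono fun t => indicator_le_self (sec U u G y h) (fun x => ENNReal.ofReal ⟪B x e, e⟫) (x + t • e)
        _ = _ := E.dom.lintegral_segment hc.le fun t ht => (hall t ht).1
        _ ≤ ENNReal.ofReal (8 * h / c) := by
          refine ENNReal.ofReal_le_ofReal ?_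
          have m2 := sec_mono (U := U) (u := u) (G := G) (x := y) (show 2 * h ≤ 2 * (2 * h) by linarith)
          have g1 := E.grad_le hc hy (h := 2 * h) (by linarith) (by linarith) (hall c ⟨hc.le, le_rfl⟩)
            (m2 he2) (m2 hy2)
          have g2 := E.grad_le hc hy (h := 2 * h) (by linarith) (by linarith) hx0 (m2 hy2) (m2 he2)
          have e1 : y + e - y = e := by abel
          have e2 : y - (y + e) = -e := by abel
          rw [e1] at g1
          rw [e2, inner_neg_right] at g2
          have e3 : 2 * (2 * h) / c = 4 * h / c := by ring
          have e4 : 8 * h / c = 2 * (4 * h / c) := by ring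
          rw [e3] at g1 g2
          have e5 : ⟪G (x + c • e) - G x, e⟫ = ⟪G (x + c • e) - G y, e⟫ - ⟪G x - G y, e⟫ := by
            simp only [inner_sub_left]; ring
          linarith
    · push Not at hex
      have : ∫⁻ t in Icc 0 c, (sec U u G y h).indicator (fun x => ENNReal.ofReal ⟪B x e, e⟫) (x + t • e) = 0 := by
        rw [setLIntegral_congr_fun measurableSet_Icc (g := fun _ => 0)
          (fun t ht => indicator_of_notMem (hex t ht) _)]
        simp
      rw [this]; exact zero_le)
  have hc0 : ENNReal.ofReal c ≠ 0 := by simpa using hc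
  rw [← ENNReal.mul_le_mul_iff_right hc0 ENNReal.ofReal_ne_top]
  refine key.trans (le_of_eq ?_)
  rw [← mul_assoc, ← ENNReal.ofReal_mul hc.le]
  congr 2
  field_simp

end MALevel

/-! ### Comparison of the Hessian with its trace in a frame -/

namespace MALevel

open scoped RealInnerProductSpace
variable {n : ℕ}
variable {lam Lam : ℝ} {Z : Set (Eucl n)} {w : Eucl n → ℝ} {G : Eucl n → Eucl n}
    {B : Eucl n → Eucl n →L[ℝ] Eucl n}
variable {h₀ c : ℝ} {U : Set (Eucl n)} {u : Eucl n → ℝ}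

/-- The trace of `Mᵀ A M`. -/
noncomputable def frameTrace (A M : Eucl n →L[ℝ] Eucl n) : ℝ :=
  ∑ i, ⟪A (M (EuclideanSpace.single i 1)), M (EuclideanSpace.single i 1)⟫

lemma quad_frame_le {A : Eucl n →L[ℝ] Eucl n} (hs : ∀ a b, ⟪A a, b⟫ = ⟪a, A b⟫) (hp : ∀ a, 0 ≤ ⟪A a, a⟫)
    (M : Eucl n →L[ℝ] Eucl n) (ξ : Eucl n) : ⟪A (M ξ), M ξ⟫ ≤ frameTrace A M * ‖ξ‖ ^ 2 := by
  have := quad_le_trace ((ContinuousLinearMap.adjoint M) ∘L A ∘L M) (fun a b => by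
    simp [ContinuousLinearMap.adjoint_inner_left, ContinuousLinearMap.adjoint_inner_right, hs]) (fun a => by
    simpa [ContinuousLinearMap.adjoint_inner_left] using hp (M a)) ξ
  simpa [ContinuousLinearMap.adjoint_inner_left, frameTrace] using this

/-- If the trace of `Mᵀ A M` is bounded, the determinant gives a lower bound of the quadratic form. -/
lemma det_frame_mul_sq_le {A : Eucl n →L[ℝ] Eucl n} (hs : ∀ a b, ⟪A a, b⟫ = ⟪a, A b⟫) (hp : ∀ a, 0 ≤ ⟪A a, a⟫)
    (M : Eucl n →L[ℝ] Eucl n) {T : ℝ} (hT : frameTrace A M ≤ T) (ξ : Eucl n) :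
    |M.det| ^ 2 * A.det * ‖ξ‖ ^ 2 ≤ T ^ (n - 1) * ⟪A (M ξ), M ξ⟫ := by
  have := det_mul_sq_le ((ContinuousLinearMap.adjoint M) ∘L A ∘L M) (fun a b => by
    simp [ContinuousLinearMap.adjoint_inner_left, ContinuousLinearMap.adjoint_inner_right, hs]) (fun a => by
    simpa [ContinuousLinearMap.adjoint_inner_left] using hp (M a)) T (fun a => by
    simpa [ContinuousLinearMap.adjoint_inner_left] using
      (quad_frame_le hs hp M a).trans (mul_le_mul_of_nonneg_right hT (sq_nonneg _))) ξ
  have hd : ((ContinuousLinearMap.adjoint M) ∘L A ∘L M).det = |M.det| ^ 2 * A.det := by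
    have h1 : ((ContinuousLinearMap.adjoint M) ∘L A ∘L M).det = (ContinuousLinearMap.adjoint M).det * (A.det * M.det) := by
      simp only [ContinuousLinearMap.det, ContinuousLinearMap.toLinearMap_comp, LinearMap.det_comp]
    rw [h1, det_adj, sq_abs]; ring
  rw [hd] at this
  simpa [ContinuousLinearMap.adjoint_inner_left] using this

lemma frameTrace_nonneg {A : Eucl n →L[ℝ] Eucl n} (hp : ∀ a, 0 ≤ ⟪A a, a⟫) (M : Eucl n →L[ℝ] Eucl n) :
    0 ≤ frameTrace A M := Finset.sum_nonneg fun _ _ => hp _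

/-- If the section contains a ball of radius `2 √(h/γ)`, the Hessian is bounded by the trace in the frame. -/
lemma norm_le_frameTrace {A : Eucl n →L[ℝ] Eucl n} (hs : ∀ a b, ⟪A a, b⟫ = ⟪a, A b⟫) (hp : ∀ a, 0 ≤ ⟪A a, a⟫)
    {S : Set (Eucl n)} {y : Eucl n} {M} (hM : IsFrame S y M) {γ h : ℝ} (hγ : 0 < γ) (hh : 0 < h)
    (hball : ∀ v, γ * ‖v‖ ^ 2 ≤ 4 * h → y + v ∈ S) : ‖A‖ ≤ n * γ / (4 * h) * frameTrace A M := by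
  have hT := frameTrace_nonneg hp M
  refine norm_le_of_quad A hs hp _ (by positivity) fun a => ?_
  rcases eq_or_ne a 0 with rfl | ha
  · simp
  have hna : 0 < ‖a‖ := norm_pos_iff.2 ha
  set s := √(4 * h / γ) / ‖a‖ with hs'
  have hs2 : s ^ 2 = 4 * h / γ / ‖a‖ ^ 2 := by rw [hs', div_pow, Real.sq_sqrt (by positivity)]
  obtain ⟨ξ, hξ, hξ1⟩ := hM.cover (y + s • a) (hball _ (by
    rw [norm_smul, mul_pow, Real.norm_eq_abs, sq_abs, hs2]
    apply le_of_eq; field_simp))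
  have hξM : M ξ = s • a := (add_left_cancel hξ).symm
  have hξn : ‖ξ‖ ^ 2 ≤ n := by
    rw [EuclideanSpace.norm_sq_eq]
    calc _ ≤ ∑ i : Fin n, (1:ℝ) := Finset.sum_le_sum fun i _ => by
          rw [Real.norm_eq_abs]; exact pow_le_one₀ (abs_nonneg _) (hξ1 i)
      _ = n := by simp
  have h1 := quad_frame_le hs hp M ξ
  rw [hξM, map_smul, real_inner_smul_left, inner_smul_right, ← mul_assoc, ← sq, hs2] at h1
  have h2 : frameTrace A M * ‖ξ‖ ^ 2 ≤ frameTrace A M * n := by gcongr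
  have h3 := h1.trans h2
  have h4 : n * γ / (4 * h) * frameTrace A M * ‖a‖ ^ 2 = frameTrace A M * n / (4 * h / γ / ‖a‖ ^ 2) := by
    field_simp
  rw [h4, le_div_iff₀ (by positivity)]
  linarith

/-- A vector leaving the section has frame coordinates of definite size: otherwise balance puts the points
`y + 2n ξᵢ M eᵢ` into the section of height `2 * h`, their average `y + 2 M ξ` lies there too, and contracting by `1/2`
returns to height `h`. -/
lemma Balanced.coord_lower (hn : 1 ≤ n) (hc : 0 < c) (E : Balanced lam Lam h₀ c U u G B) {y : Eucl n}
    (hy : ball y (1/4) ⊆ U) {h : ℝ} (hh : 0 < h) (hh0 : 2 * h ≤ h₀) {M} (hM : IsFrame (sec U u G y h) y M)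
    {ξ : Eucl n} (hξ : y + M ξ ∉ sec U u G y h) : (c / (2 * n)) ^ 2 ≤ ‖ξ‖ ^ 2 := by
  have hn0 : (0:ℝ) < n := by exact_mod_cast hn
  have hyU : y ∈ U := hy (mem_ball_self (by norm_num))
  by_contra! hlt
  have hlt' : ‖ξ‖ < c / (2 * n) := lt_of_pow_lt_pow_left₀ 2 (by positivity) hlt
  refine hξ ?_
  have hs := E.sect y hy (2 * h) hh0
  have hy2 : y ∈ sec U u G y (2 * h) := self_mem_sec hyU (by linarith)
  have hi : ∀ i, y + (2 * n * ξ i) • M (EuclideanSpace.single i 1) ∈ sec U u G y (2 * h) := by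
    intro i
    have hv : y + M (EuclideanSpace.single i 1) ∈ sec U u G y (2 * h) :=
      E.closure_sec_subset hy (by linarith) hh0 (hM.vertex i)
    have hξi : |2 * n * ξ i| ≤ c := by
      have h1 : |ξ i| ≤ ‖ξ‖ := PiLp.norm_apply_le ξ i
      rw [abs_mul, abs_of_pos (by positivity)]
      rw [lt_div_iff₀ (by positivity)] at hlt'
      nlinarith
    have e0 : excess u G y y ≤ 2 * h / 2 := by rw [excess_self]; linarith
    rcases le_total 0 (2 * n * ξ i) with h0 | h0
    · have := E.bal y hy (2 * h) (by linarith) hh0 y hy2 e0 _ hv _ hy2 _ h0 ((le_abs_self _).trans hξi)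
      convert this using 2; module
    · have := E.bal y hy (2 * h) (by linarith) hh0 y hy2 e0 _ hy2 _ hv (-(2 * n * ξ i)) (by linarith)
        ((neg_le_abs _).trans hξi)
      convert this using 2; module
  have hsum := hs.convex.sum_mem (t := Finset.univ) (w := fun _ : Fin n => (1 / n : ℝ)) (fun _ _ => by positivity)
    (by simp [hn0.ne']) (fun i _ => hi i)
  have hexp : ξ = ∑ i, ξ i • EuclideanSpace.single i (1:ℝ) := by
    simpa using ((EuclideanSpace.basisFun (Fin n) ℝ).toBasis.sum_repr ξ).symm
  have e1 : ∑ i : Fin n, (1 / n : ℝ) • (y + (2 * n * ξ i) • M (EuclideanSpace.single i 1)) = y + (2:ℝ) • M ξ := by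
    have : M ξ = ∑ i, ξ i • M (EuclideanSpace.single i (1:ℝ)) := by
      conv_lhs => rw [hexp, map_sum]
      simp
    rw [this, Finset.smul_sum]
    simp only [smul_add, Finset.sum_add_distrib, smul_smul]
    congr 1
    · rw [Finset.sum_const, Finset.card_univ, Fintype.card_fin, ← Nat.cast_smul_eq_nsmul ℝ, smul_smul]
      rw [mul_one_div_cancel hn0.ne', one_smul]
    · refine Finset.sum_congr rfl fun i _ => ?_
      congr 1; field_simp
  rw [e1] at hsum
  have := E.contract hyU hsum (s := 1 / 2) (by norm_num) (by norm_num)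
  convert this using 1
  · ring_nf
  · rw [add_sub_cancel_left, smul_smul]; norm_num

end MALevel

/-! ### The integral of the Hessian over one section -/

namespace MALevel

open scoped RealInnerProductSpace
variable {n : ℕ}
variable {lam Lam : ℝ} {Z : Set (Eucl n)} {w : Eucl n → ℝ} {G : Eucl n → Eucl n}
    {B : Eucl n → Eucl n →L[ℝ] Eucl n}
variable {h₀ c : ℝ} {U : Set (Eucl n)} {u : Eucl n → ℝ}

/-- The integral of the trace over a section is bounded by its height times the volume of the concentric section of
height `c ^ 2 / 16 * h`: sum over the edges of the frame, then use doubling. -/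
lemma Balanced.lintegral_frameTrace_le (hc : 0 < c) (hc1 : c ≤ 1) (E : Balanced lam Lam h₀ c U u G B) {y : Eucl n}
    (hy : ball y (1/4) ⊆ U) {h : ℝ} (hh : 0 < h) (hh0 : 4 * h ≤ h₀) {M} (hM : IsFrame (sec U u G y h) y M) :
    ∫⁻ x in sec U u G y h, ENNReal.ofReal (frameTrace (B x) M) ≤
      ENNReal.ofReal (n * (8 * h / c ^ 2) * (32 / c ^ 2) ^ n) * volume (sec U u G y (c ^ 2 / 16 * h)) := by
  have hyU : y ∈ U := hy (mem_ball_self (by norm_num))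
  have ho := (E.sect y hy h (by linarith)).isOpen
  have hc2 : c ^ 2 ≤ 1 := pow_le_one₀ hc.le hc1
  have h1 : ∫⁻ x in sec U u G y h, ENNReal.ofReal (frameTrace (B x) M) =
      ∑ i, ∫⁻ x in sec U u G y h,
        ENNReal.ofReal ⟪B x (M (EuclideanSpace.single i 1)), M (EuclideanSpace.single i 1)⟫ := by
    rw [← lintegral_finsetSum']
    · refine setLIntegral_congr_fun ho.measurableSet fun x hx => ?_
      rw [frameTrace]
      exact ENNReal.ofReal_sum_of_nonneg fun i _ => E.dom.nonneg x hx.1 _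
    · intro i _
      refine ContinuousOn.aemeasurable ?_ ho.measurableSet
      refine ENNReal.continuous_ofReal.comp_continuousOn ?_
      exact ((E.dom.contB.mono fun x hx => hx.1).clm_apply continuousOn_const).inner continuousOn_const
  rw [h1]
  have h2 := E.volume_sec_le hyU (h := 2 * h) (s := c ^ 2 / 32) (by positivity) (by linarith)
  have e1 : c ^ 2 / 32 * (2 * h) = c ^ 2 / 16 * h := by ring
  have e2 : 1 / (c ^ 2 / 32) = 32 / c ^ 2 := by field_simp
  rw [e1, e2] at h2
  calc _ ≤ ∑ i : Fin n, ENNReal.ofReal (8 * h / c ^ 2) * volume (sec U u G y (2 * h)) :=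
        Finset.sum_le_sum fun i _ => E.lintegral_edge_le hc hy hh hh0 (hM.vertex i)
    _ = ENNReal.ofReal (n * (8 * h / c ^ 2)) * volume (sec U u G y (2 * h)) := by
        rw [Finset.sum_const, Finset.card_univ, Fintype.card_fin, nsmul_eq_mul, ← mul_assoc,
          ENNReal.ofReal_mul (by positivity), ENNReal.ofReal_natCast]
    _ ≤ ENNReal.ofReal (n * (8 * h / c ^ 2)) *
        (ENNReal.ofReal ((32 / c ^ 2) ^ n) * volume (sec U u G y (c ^ 2 / 16 * h))) := by gcongr
    _ = _ := by rw [← mul_assoc, ← ENNReal.ofReal_mul (by positivity)]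

/-- On a section whose inner radius is comparable to `√(h/γ)`, the integral of `‖D²u‖` is controlled by `γ` times the
measure of the part of a smaller concentric section on which `‖D²u‖ ≳ γ`.

Since the section contains a ball of radius `2 √(h/γ)`, the trace in the frame controls `‖D²u‖`. On at least half of the
smaller section the trace is at most twice its average; there the bound `det D²u ≥ lam` gives a lower bound for the
quadratic form, which is evaluated at a vector `ζ` of length at most `√(8h/γ)` leaving the section. -/
lemma exists_local (hn : 1 ≤ n) (hlam : 0 < lam) (hLam : 0 < Lam) (h₀ : ℝ) (hc : 0 < c) (hc1 : c ≤ 1) :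
    ∃ C > (0:ℝ), ∃ κ > (0:ℝ), ∀ (U : Set (Eucl n)) (u : Eucl n → ℝ) (G : Eucl n → Eucl n)
      (B : Eucl n → Eucl n →L[ℝ] Eucl n), Balanced lam Lam h₀ c U u G B → ∀ y, ball y (1/4) ⊆ U → ∀ h, 0 < h →
      4 * h ≤ h₀ → ∀ γ, 0 < γ → (∀ v, γ * ‖v‖ ^ 2 ≤ 4 * h → y + v ∈ sec U u G y h) →
      (∃ v, γ * ‖v‖ ^ 2 ≤ 8 * h ∧ y + v ∉ sec U u G y h) →
      ∫⁻ x in sec U u G y h, ENNReal.ofReal ‖B x‖ ≤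
        ENNReal.ofReal (C * γ) * volume {x ∈ sec U u G y (c ^ 2 / 16 * h) | κ * γ ≤ ‖B x‖} := by
  have hn0 : (0:ℝ) < n := by exact_mod_cast hn
  set K₁ : ℝ := n * (8 / c ^ 2) * (32 / c ^ 2) ^ n with hK₁
  have hK₁pos : 0 < K₁ := by positivity
  set k₂ : ℝ := lam / ((4 * n) ^ n * Lam) with hk₂
  have hk₂pos : 0 < k₂ := by positivity
  refine ⟨n * K₁ / 2, by positivity, k₂ * (c / (2 * n)) ^ 2 / ((2 * K₁) ^ (n - 1) * 8), by positivity, ?_⟩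
  intro U u G B E y hy h hh hh0 γ hγ hball ⟨ζ, hζ, hζout⟩
  have hyU : y ∈ U := hy (mem_ball_self (by norm_num))
  have hs := E.sect y hy h (by linarith)
  obtain ⟨M, hM⟩ := exists_frame hs.isOpen hs.convex hs.bounded (self_mem_sec hyU hh)
  have hηh : c ^ 2 / 16 * h ≤ h := by
    have hc2 : c ^ 2 ≤ 1 := pow_le_one₀ hc.le hc1
    nlinarith
  set S' := sec U u G y (c ^ 2 / 16 * h) with hS'
  have hsub : S' ⊆ sec U u G y h := sec_mono hηh
  have hs' := E.sect y hy (c ^ 2 / 16 * h) (by linarith)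
  set g : Eucl n → ENNReal := fun x => ENNReal.ofReal (frameTrace (B x) M) with hg
  have hint : ∫⁻ x in sec U u G y h, g x ≤ ENNReal.ofReal (K₁ * h) * volume S' := by
    convert E.lintegral_frameTrace_le hc hc1 hy hh hh0 hM using 3
    rw [hK₁]; ring
  have hgm : AEMeasurable g (volume.restrict S') := by
    refine ContinuousOn.aemeasurable ?_ hs'.isOpen.measurableSet
    refine ENNReal.continuous_ofReal.comp_continuousOn ?_
    exact continuousOn_finsetSum _ fun i _ =>
      ((E.dom.contB.mono fun x hx => hx.1).clm_apply continuousOn_const).inner continuousOn_const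
  -- points at which the trace is at most twice its average
  have hgood : ∀ x ∈ S', g x < ENNReal.ofReal (2 * K₁ * h) →
      k₂ * (c / (2 * n)) ^ 2 / ((2 * K₁) ^ (n - 1) * 8) * γ ≤ ‖B x‖ := by
    intro x hx hgx
    have hT : frameTrace (B x) M ≤ 2 * K₁ * h := (ENNReal.ofReal_lt_ofReal_iff (by positivity)).1 hgx |>.le
    obtain ⟨ξ, hξ⟩ := hM.exists_coord ζ
    have h1 := E.coord_lower hn hc hy hh (by linarith) hM (ξ := ξ) (by rwa [hξ])
    have h2 := det_frame_mul_sq_le (E.dom.symm x hx.1) (E.dom.nonneg x hx.1) M hT ξ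
    have h3 := hs.pow_le_det hn hlam hLam (self_mem_sec hyU hh) (by simpa [excess_self] using hh) hM
    rw [excess_self, zero_sub, neg_neg] at h3
    have h4 : k₂ * h ^ n ≤ |M.det| ^ 2 * (B x).det := by
      calc k₂ * h ^ n ≤ k₂ * ((4 * n) ^ n * Lam * |M.det| ^ 2) := by gcongr
        _ = |M.det| ^ 2 * lam := by rw [hk₂]; field_simp
        _ ≤ _ := by gcongr; exact E.dom.le_det x hx.1
    have h5 : ⟪B x ζ, ζ⟫ ≤ ‖B x‖ * (8 * h / γ) := by
      calc ⟪B x ζ, ζ⟫ ≤ ‖B x ζ‖ * ‖ζ‖ := real_inner_le_norm _ _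
        _ ≤ ‖B x‖ * ‖ζ‖ * ‖ζ‖ := by gcongr; exact (B x).le_opNorm ζ
        _ = ‖B x‖ * ‖ζ‖ ^ 2 := by ring
        _ ≤ _ := by
          gcongr
          rw [le_div_iff₀ hγ]; linarith
    rw [hξ] at h2
    have h6 : k₂ * h ^ n * (c / (2 * n)) ^ 2 ≤ (2 * K₁ * h) ^ (n - 1) * (‖B x‖ * (8 * h / γ)) := by
      calc _ ≤ |M.det| ^ 2 * (B x).det * ‖ξ‖ ^ 2 :=
            mul_le_mul h4 h1 (by positivity) (le_trans (by positivity) h4)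
        _ ≤ _ := h2
        _ ≤ _ := by gcongr
    have h7 : h ^ n = h ^ (n - 1) * h := by rw [← pow_succ]; congr 1; omega
    have h8 : (k₂ * (c / (2 * n)) ^ 2) * (h ^ (n - 1) * h) ≤
        ((2 * K₁) ^ (n - 1) * 8 * (‖B x‖ / γ)) * (h ^ (n - 1) * h) := by
      calc _ = k₂ * h ^ n * (c / (2 * n)) ^ 2 := by rw [h7]; ring
        _ ≤ _ := h6
        _ = _ := by rw [mul_pow (2 * K₁)]; ring
    have h9 := le_of_mul_le_mul_right h8 (by positivity)
    rw [div_mul_eq_mul_div, div_le_iff₀ (by positivity)]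
    rw [← mul_div_assoc, le_div_iff₀ hγ] at h9
    linarith
  set A := {x ∈ S' | k₂ * (c / (2 * n)) ^ 2 / ((2 * K₁) ^ (n - 1) * 8) * γ ≤ ‖B x‖} with hA
  have hvol : volume S' ≤ 2 * volume A := by
    have hfin : volume S' ≠ ⊤ := hs'.bounded.measure_lt_top.ne
    set D := {x | ENNReal.ofReal (2 * K₁ * h) ≤ g x} with hD
    -- Chebyshev's inequality
    have m1 := mul_meas_ge_le_lintegral₀ hgm (ENNReal.ofReal (2 * K₁ * h))
    have m2 : ENNReal.ofReal (2 * K₁ * h) * volume.restrict S' D ≤ ENNReal.ofReal (K₁ * h) * volume S' :=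
      m1.trans ((lintegral_mono_set hsub).trans hint)
    have m3 : 2 * volume.restrict S' D ≤ volume S' := by
      have : ENNReal.ofReal (2 * K₁ * h) = ENNReal.ofReal (K₁ * h) * 2 := by
        rw [mul_assoc, mul_comm, ENNReal.ofReal_mul (by positivity)]; simp
      rw [this, mul_assoc] at m2
      exact (ENNReal.mul_le_mul_iff_right (by simpa using by positivity) ENNReal.ofReal_ne_top).1 m2
    have m4 : volume.restrict S' Dᶜ ≤ volume A := by
      rw [Measure.restrict_apply' hs'.isOpen.measurableSet]
      refine measure_mono fun x hx => ⟨hx.2, hgood x hx.2 ?_⟩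
      exact not_le.1 hx.1
    have m5 := measure_univ_le_add_compl (μ := volume.restrict S') D
    rw [Measure.restrict_apply_univ] at m5
    have m6 : volume S' + volume S' ≤ volume S' + 2 * volume A := by
      calc volume S' + volume S' = 2 * volume S' := (two_mul _).symm
        _ ≤ 2 * (volume.restrict S' D + volume.restrict S' Dᶜ) := by gcongr
        _ = 2 * volume.restrict S' D + 2 * volume.restrict S' Dᶜ := by ring
        _ ≤ _ := by gcongr
    exact (ENNReal.add_le_add_iff_left hfin).1 m6
  calc ∫⁻ x in sec U u G y h, ENNReal.ofReal ‖B x‖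
      ≤ ∫⁻ x in sec U u G y h, ENNReal.ofReal (n * γ / (4 * h)) * g x := by
        refine setLIntegral_mono' hs.isOpen.measurableSet fun x hx => ?_
        rw [hg, ← ENNReal.ofReal_mul (by positivity)]
        exact ENNReal.ofReal_le_ofReal
          (norm_le_frameTrace (E.dom.symm x hx.1) (E.dom.nonneg x hx.1) hM hγ hh hball)
    _ = ENNReal.ofReal (n * γ / (4 * h)) * ∫⁻ x in sec U u G y h, g x :=
        lintegral_const_mul' _ _ ENNReal.ofReal_ne_top
    _ ≤ ENNReal.ofReal (n * γ / (4 * h)) * (ENNReal.ofReal (K₁ * h) * (2 * volume A)) := by gcongr; exact hint.trans (by gcongr)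
    _ = _ := by
        rw [← mul_assoc, ← mul_assoc, ← ENNReal.ofReal_mul (by positivity)]
        congr 1
        rw [show (2:ENNReal) = ENNReal.ofReal 2 by simp, ← ENNReal.ofReal_mul (by positivity)]
        congr 1
        field_simp; norm_num

end MALevel

/-! ### Choice of the height of a section -/

namespace MALevel

open scoped RealInnerProductSpace
variable {n : ℕ}
variable {lam Lam : ℝ} {Z : Set (Eucl n)} {w : Eucl n → ℝ} {G : Eucl n → Eucl n}
    {B : Eucl n → Eucl n →L[ℝ] Eucl n}
variable {h₀ c : ℝ} {U : Set (Eucl n)} {u : Eucl n → ℝ}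

/-- If arbitrarily small sections at `y` contain balls of radius `√(8h/γ)`, then `‖D²u(y)‖ ≤ γ/2`: in
the direction `e`, the tangent inequality between `y + τ e` and `y + 2 τ e` bounds the difference quotient of the
gradient at step `τ`. -/
lemma MADomain.norm_le_of_sec (E : MADomain lam Lam U u G B) {y : Eucl n} (hy : y ∈ U) {γ h : ℝ} (hγ : 0 < γ)
    (hh : 0 < h) (hQ : ∀ k : ℕ, ∀ v, γ * ‖v‖ ^ 2 ≤ 8 * (h / 2 ^ k) → y + v ∈ sec U u G y (h / 2 ^ k)) :
    ‖B y‖ ≤ γ / 2 := by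
  refine norm_le_of_quad _ (E.symm y hy) (E.nonneg y hy) _ (by positivity) fun e => ?_
  rcases eq_or_ne e 0 with rfl | he
  · simp
  have hne : 0 < ‖e‖ := norm_pos_iff.2 he
  set τ : ℕ → ℝ := fun k => √(2 * (h / 2 ^ k) / γ) / ‖e‖ with hτ
  have hτpos : ∀ k, 0 < τ k := fun k => by simp only [hτ]; positivity
  have hτsq : ∀ k, τ k ^ 2 * ‖e‖ ^ 2 = 2 * (h / 2 ^ k) / γ := fun k => by
    simp only [hτ]
    rw [div_pow, Real.sq_sqrt (by positivity)]; field_simp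
  have hτ0 : Filter.Tendsto τ Filter.atTop (nhdsWithin 0 {0}ᶜ) := by
    refine tendsto_nhdsWithin_iff.2 ⟨?_, Filter.Eventually.of_forall fun k => (hτpos k).ne'⟩
    have h1 : Filter.Tendsto (fun k : ℕ => h / 2 ^ k) Filter.atTop (nhds 0) := by
      have := (tendsto_pow_atTop_nhds_zero_of_lt_one (r := (1/2:ℝ)) (by norm_num) (by norm_num)).const_mul h
      simpa [div_eq_mul_inv] using this
    have h2 : Filter.Tendsto (fun k : ℕ => √(2 * (h / 2 ^ k) / γ) / ‖e‖) Filter.atTop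
        (nhds (√(2 * 0 / γ) / ‖e‖)) :=
      (((h1.const_mul 2).div_const γ).sqrt).div_const _
    simpa using h2
  have hder : HasDerivAt (fun t : ℝ => ⟪G (y + t • e), e⟫) ⟪B y e, e⟫ 0 := by
    have h1 : HasDerivAt (fun t : ℝ => y + t • e) e 0 := by
      simpa using ((hasDerivAt_id (0:ℝ)).smul_const e).const_add y
    have h2 : HasDerivAt (fun t : ℝ => G (y + t • e)) (B y e) 0 :=
      HasFDerivAt.comp_hasDerivAt (0:ℝ) (by simpa using E.hess y hy) h1
    simpa using h2.inner ℝ (hasDerivAt_const 0 e)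
  refine le_of_tendsto (hder.tendsto_slope_zero.comp hτ0) (Filter.Eventually.of_forall fun k => ?_)
  simp only [Function.comp, zero_add, zero_smul, add_zero, smul_eq_mul]
  have hmem := hQ k ((2 * τ k) • e) (by
    rw [norm_smul, mul_pow, Real.norm_eq_abs, sq_abs, mul_pow, mul_assoc, hτsq]
    apply le_of_eq; field_simp; norm_num)
  have hmid : y + τ k • e ∈ U := by
    have := E.convex hy hmem.1 (a := 1/2) (b := 1/2) (by norm_num) (by norm_num) (by norm_num)
    convert this using 1; module
  have h1 := E.tangent _ hmid _ hmem.1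
  have h2 := E.tangent y hy _ hmid
  have h3 := hmem.2
  have e1 : y + (2 * τ k) • e - (y + τ k • e) = τ k • e := by module
  rw [e1, inner_smul_right] at h1
  rw [add_sub_cancel_left, inner_smul_right] at h2
  simp only [excess] at h3
  rw [add_sub_cancel_left, inner_smul_right] at h3
  rw [inv_mul_le_iff₀ (hτpos k)]
  have h4 : h / 2 ^ k = τ k * (τ k * (γ / 2 * ‖e‖ ^ 2)) := by
    have := hτsq k
    rw [eq_div_iff hγ.ne'] at this
    linarith
  rw [h4] at h3
  refine le_of_mul_le_mul_left ?_ (hτpos k)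
  linarith

/-- A point with large Hessian has a section, of height at most half of a given one, whose inner radius is comparable
to `√(h/γ)`. Otherwise the inclusion of the ball of radius `√(8h/γ)` in the section of height `h` passes from `h` to
`h/2` indefinitely: contraction yields the ball of radius `√(4 (h/2)/γ)` in the section of height `h/2`, and the failure
of the claim at `h/2` improves `4` to `8`. Then `D²u(y)` is too small. -/
lemma Balanced.exists_height (E : Balanced lam Lam h₀ c U u G B) {y : Eucl n} (hy : y ∈ U) {γ h₁ : ℝ} (hγ : 0 < γ)
    (hh₁ : 0 < h₁) (hQ : ∀ v, γ * ‖v‖ ^ 2 ≤ 8 * h₁ → y + v ∈ sec U u G y h₁) (hB : γ ≤ ‖B y‖) :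
    ∃ h, 0 < h ∧ h ≤ h₁ / 2 ∧ (∀ v, γ * ‖v‖ ^ 2 ≤ 4 * h → y + v ∈ sec U u G y h) ∧
      ∃ v, γ * ‖v‖ ^ 2 ≤ 8 * h ∧ y + v ∉ sec U u G y h := by
  by_contra! hno
  have hall : ∀ k : ℕ, ∀ v, γ * ‖v‖ ^ 2 ≤ 8 * (h₁ / 2 ^ k) → y + v ∈ sec U u G y (h₁ / 2 ^ k) := by
    intro k
    induction k with
    | zero => simpa using hQ
    | succ k ih =>
      have e1 : h₁ / 2 ^ (k + 1) = 1 / 2 * (h₁ / 2 ^ k) := by rw [pow_succ]; field_simp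
      have e2 : h₁ / 2 ^ k ≤ h₁ := div_le_self hh₁.le (one_le_pow₀ (by norm_num))
      refine hno _ (by positivity) (by rw [e1]; linarith) fun v hv => ?_
      rw [e1] at hv ⊢
      have h1 := ih ((2:ℝ) • v) (by
        rw [norm_smul, mul_pow]; norm_num; linarith)
      have := E.contract hy h1 (s := 1 / 2) (by norm_num) (by norm_num)
      convert this using 2
      rw [add_sub_cancel_left, smul_smul]; norm_num
  have := E.dom.norm_le_of_sec hy hγ hh₁ hall
  linarith

/-- Small sections centred in `½U` lie in `¾U`: if `x = v/2` and `x + L (y - x) ∈ U` with `L ≥ 2`, then `4/3 y` is a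
convex combination of `v`, `x + L (y - x)` and `0`. -/
lemma Balanced.sec_subset_smul (hc : 0 < c) (E : Balanced lam Lam h₀ c U u G B) {x : Eucl n} (h0 : (0 : Eucl n) ∈ U)
    (hx : ball x (1/4) ⊆ U) (hxU : x ∈ (1/2 : ℝ) • U) (hh₀ : 0 < h₀) {k : ℕ} (hk : 2 ≤ (1 + c) ^ k) :
    sec U u G x (h₀ / 2 ^ k) ⊆ (3/4 : ℝ) • U := by
  intro y hy
  have h1 := (E.shrink hc hx k hh₀ le_rfl hy).1
  obtain ⟨v, hv, hvx⟩ := hxU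
  change (1/2 : ℝ) • v = x at hvx
  set L := (1 + c) ^ k with hL
  have hLpos : 0 < L := by linarith
  refine ⟨(4/3 : ℝ) • y, ?_, ?_⟩
  · have hL1 : 1 / L ≤ 1 / 2 := by gcongr
    have hL0 : 0 < 1 / L := by positivity
    have h2 := E.dom.convex.sum_mem (t := Finset.univ) (w := ![2/3 * (1 - 1/L), 4/3 * (1/L), 1/3 - 2/3 * (1/L)])
      (z := ![v, x + L • (y - x), 0]) (by
        intro i _; fin_cases i <;> simp <;> simp at hL1 hL0 <;> linarith) (by
        simp [Fin.sum_univ_succ]; ring) (by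
        intro i _; fin_cases i <;> simp <;> assumption)
    convert h2 using 1
    simp only [Fin.sum_univ_succ, Fin.sum_univ_zero, Matrix.cons_val_zero, Matrix.cons_val_succ, smul_zero, add_zero]
    have e1 : (4 / 3 * (1 / L)) • (x + L • (y - x)) = (4 / 3 * (1 / L)) • x + (4/3 : ℝ) • (y - x) := by
      rw [smul_add, smul_smul]; congr 2; field_simp
    rw [e1, ← hvx]; module
  · change (3/4 : ℝ) • (4/3 : ℝ) • y = y
    rw [smul_smul]; norm_num

end MALevel

/-! ### Covering argument -/

namespace MALevel

open scoped RealInnerProductSpace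
variable {n : ℕ}
variable {lam Lam : ℝ} {Z : Set (Eucl n)} {w : Eucl n → ℝ} {G : Eucl n → Eucl n}
    {B : Eucl n → Eucl n →L[ℝ] Eucl n}
variable {h₀ c : ℝ} {U : Set (Eucl n)} {u : Eucl n → ℝ}

lemma MADomain.measurableSet_superlevel (E : MADomain lam Lam U u G B) {S : Set (Eucl n)} (hS : IsOpen S)
    (hSU : S ⊆ U) (r : ℝ) : MeasurableSet {x ∈ S | r ≤ ‖B x‖} := by
  have h1 : IsOpen (S ∩ (fun x => ‖B x‖) ⁻¹' Iio r) :=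
    ((E.contB.mono hSU).norm).isOpen_inter_preimage hS isOpen_Iio
  have h2 : {x ∈ S | r ≤ ‖B x‖} = S \ (S ∩ (fun x => ‖B x‖) ⁻¹' Iio r) := by
    ext x
    simp only [mem_ofPred_eq, mem_sdiff, mem_inter_iff, mem_preimage, mem_Iio, not_and, not_lt]
    tauto
  rw [h2]
  exact hS.measurableSet.diff h1.measurableSet

lemma ball_half_subset {U : Set (Eucl n)} (hc : Convex ℝ U) (h1 : ball 0 1 ⊆ U) {x : Eucl n}
    (hx : x ∈ (1/2 : ℝ) • U) : ball x (1/2) ⊆ U := by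
  obtain ⟨v, hv, rfl⟩ := hx
  intro y hy
  have h2 : (2:ℝ) • (y - (1/2:ℝ) • v) ∈ U := h1 (by
    rw [mem_ball_zero_iff, norm_smul]
    rw [mem_ball, dist_eq_norm] at hy
    norm_num at hy ⊢
    linarith)
  have := hc hv h2 (a := 1/2) (b := 1/2) (by norm_num) (by norm_num) (by norm_num)
  convert this using 1
  module

/-- The level set estimate for solutions given with their gradient and Hessian. -/
theorem exists_level_set (hn : 1 ≤ n) (hlam : 0 < lam) (hLam : 0 < Lam) :
    ∃ C > (0:ℝ), ∃ κ > (0:ℝ), ∃ cbar : ℝ, 2 ≤ cbar ∧ ∀ (U : Set (Eucl n)) (u : Eucl n → ℝ) (G : Eucl n → Eucl n)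
      (B : Eucl n → Eucl n →L[ℝ] Eucl n), MADomain lam Lam U u G B → ball 0 1 ⊆ U → U ⊆ ball 0 n → ∀ γ, cbar ≤ γ →
      ∫⁻ x in (1/2 : ℝ) • U ∩ {x | γ ≤ ‖B x‖}, ENNReal.ofReal ‖B x‖ ≤
        ENNReal.ofReal (C * γ) * volume {x ∈ (3/4 : ℝ) • U | κ * γ ≤ ‖B x‖} := by
  obtain ⟨D, hD, k₁, -, hbd⟩ := exists_bounds (n := n) hn hlam hLam
  obtain ⟨h₀, hh₀, c, hc, hc1, hbal⟩ := exists_balanced (n := n) hn hlam hLam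
  obtain ⟨C, hC, κ, hκ, hloc⟩ := exists_local (n := n) hn hlam hLam h₀ hc hc1
  obtain ⟨k, hk⟩ := pow_unbounded_of_one_lt 2 (show 1 < 1 + c by linarith)
  -- `h₁` makes the sections of height `h₁` centred in `½U` lie in `¾U`; at distance at most `r` from such a centre the
  -- excess is below `h₁`, by the gradient bound `8 * D`
  set h₁ : ℝ := h₀ / 2 ^ k / 4 with hh₁
  have hh₁pos : 0 < h₁ := by positivity
  have hh₁k : h₁ ≤ h₀ / 2 ^ k := div_le_self (by positivity) (by norm_num)
  have hh₁0 : 4 * h₁ ≤ h₀ := by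
    have : h₀ / 2 ^ k ≤ h₀ := div_le_self hh₀.le (one_le_pow₀ (by norm_num))
    rw [hh₁]; linarith
  set r : ℝ := min (1/8) (h₁ / (32 * D)) with hr
  have hrpos : 0 < r := by positivity
  -- for `γ ≥ 8 h₁ / r ^ 2` the ball of radius `√(8 h₁ / γ)` is contained in the ball of radius `r`
  refine ⟨C, hC, κ, hκ, max 2 (8 * h₁ / r ^ 2), le_max_left _ _, ?_⟩
  intro U u G B hM hU1 hUn γ hγ
  have hγ2 : 2 ≤ γ := (le_max_left _ _).trans hγ
  have hγr : 8 * h₁ / r ^ 2 ≤ γ := (le_max_right _ _).trans hγ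
  have hγ0 : 0 < γ := by linarith
  have E := hbal U u G B hM hU1 hUn
  have h0 : (0 : Eucl n) ∈ U := hU1 (mem_ball_self one_pos)
  set t : Set (Eucl n) := (1/2 : ℝ) • U ∩ {x | γ ≤ ‖B x‖} with ht
  have hthalf : ∀ y ∈ t, ball y (1/2) ⊆ U := fun y hy => ball_half_subset hM.convex hU1 hy.1
  have htq : ∀ y ∈ t, ball y (1/4) ⊆ U := fun y hy => (ball_subset_ball (by norm_num)).trans (hthalf y hy)
  have htU : ∀ y ∈ t, y ∈ U := fun y hy => htq y hy (mem_ball_self (by norm_num))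
  have hex : ∀ y ∈ t, ∃ h, 0 < h ∧ h ≤ h₁ / 2 ∧ (∀ v, γ * ‖v‖ ^ 2 ≤ 4 * h → y + v ∈ sec U u G y h) ∧
      ∃ v, γ * ‖v‖ ^ 2 ≤ 8 * h ∧ y + v ∉ sec U u G y h := by
    intro y hy
    refine E.exists_height (htU y hy) hγ0 hh₁pos (fun v hv => ?_) hy.2
    have hvr : ‖v‖ ≤ r := by
      rw [div_le_iff₀ (by positivity)] at hγr
      exact le_of_sq_le_sq (le_of_mul_le_mul_left (hv.trans hγr) hγ0) hrpos.le
    have hv8 : ‖v‖ ≤ 1/8 := hvr.trans (min_le_left _ _)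
    have hvq : ball (y + v) (1/4) ⊆ U := fun z hz => hthalf y hy (by
      rw [mem_ball, dist_eq_norm] at hz ⊢
      have : z - y = (z - (y + v)) + v := by abel
      rw [this]
      linarith [norm_add_le (z - (y + v)) v])
    have hyv : y + v ∈ U := hvq (mem_ball_self (by norm_num))
    refine ⟨hyv, ?_⟩
    have g1 := ((hbd U u G B hM hU1 hUn).2 y (htq y hy)).2
    have g2 := ((hbd U u G B hM hU1 hUn).2 _ hvq).2
    have h1 := hM.tangent _ hyv y (htU y hy)
    have e1 : y - (y + v) = -v := by abel
    rw [e1, inner_neg_right] at h1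
    have h2 : ⟪G (y + v) - G y, v⟫ ≤ 16 * D * r := by
      calc _ ≤ ‖G (y + v) - G y‖ * ‖v‖ := real_inner_le_norm _ _
        _ ≤ (16 * D) * r := by
          gcongr
          linarith [norm_sub_le (G (y + v)) (G y)]
    have h3 : 16 * D * r ≤ h₁ / 2 := by
      calc _ ≤ 16 * D * (h₁ / (32 * D)) := by gcongr; exact min_le_right _ _
        _ = _ := by field_simp; norm_num
    rw [inner_sub_left] at h2
    simp only [excess, add_sub_cancel_left]
    linarith
  choose! δ hδ0 hδ1 hδin hδout using hex
  set η : ℝ := c ^ 2 / 16 with hη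
  have hηpos : 0 < η := by positivity
  have hη1 : η ≤ 1 := by
    have hc2 : c ^ 2 ≤ 1 := pow_le_one₀ hc.le hc1
    rw [hη]; linarith
  have hsmall : ∀ y ∈ t, sec U u G y (η * δ y) ⊆ (3/4 : ℝ) • U := fun y hy => by
    have h1 := hδ0 y hy
    have h2 := hδ1 y hy
    exact (sec_mono (by nlinarith)).trans (E.sec_subset_smul hc h0 (htq y hy) hy.1 hh₀ hk.le)
  have hopen : ∀ y ∈ t, IsOpen (sec U u G y (η * δ y)) := fun y hy => by
    have h1 := hδ0 y hy
    have h2 := hδ1 y hy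
    exact (E.sect y (htq y hy) _ (by nlinarith)).isOpen
  have hne : ∀ y ∈ t, (sec U u G y (η * δ y)).Nonempty := fun y hy =>
    ⟨y, self_mem_sec (htU y hy) (mul_pos hηpos (hδ0 y hy))⟩
  -- Vitali selection of disjoint shrunken sections, heights compared up to a factor `2`; by engulfing, the full
  -- sections of the selected family cover `t`
  obtain ⟨s, hst, hdisj, hcov⟩ := Vitali.exists_disjoint_subfamily_covering_enlargement
    (fun y => sec U u G y (η * δ y)) t δ 2 one_lt_two (fun y hy => (hδ0 y hy).le) (h₁ / 2) hδ1 hne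
  have hcount : s.Countable :=
    hdisj.countable_of_isOpen (fun y hy => hopen y (hst hy)) (fun y hy => hne y (hst hy))
  have : Countable s := hcount.to_subtype
  have hcover : t ⊆ ⋃ y : s, sec U u G y (δ y) := by
    intro x hx
    obtain ⟨y, hy, ⟨v, hvx, hvy⟩, hxy⟩ := hcov x hx
    have hyt := hst hy
    refine mem_iUnion.2 ⟨⟨y, hy⟩, ?_⟩
    have hv : ball v (1/4) ⊆ U := ball_subset_of_mem_smul hM.convex hU1 (hsmall y hyt hvy)
    exact E.engulf hc hc1 (htq x hx) (htq y hyt) hv (hδ0 y hyt) (by linarith [hδ1 y hyt]) hvy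
      (sec_mono (by rw [← hη]; nlinarith) hvx)
  calc ∫⁻ x in t, ENNReal.ofReal ‖B x‖
      ≤ ∫⁻ x in ⋃ y : s, sec U u G y (δ y), ENNReal.ofReal ‖B x‖ := lintegral_mono_set hcover
    _ ≤ ∑' y : s, ∫⁻ x in sec U u G y (δ y), ENNReal.ofReal ‖B x‖ := lintegral_iUnion_le _ _
    _ ≤ ∑' y : s, ENNReal.ofReal (C * γ) * volume {x ∈ sec U u G y (η * δ y) | κ * γ ≤ ‖B x‖} := by
        refine ENNReal.tsum_le_tsum fun y => ?_
        have hyt := hst y.2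
        exact hloc U u G B E y (htq y hyt) (δ y) (hδ0 y hyt) (by linarith [hδ1 y hyt]) γ hγ0 (hδin y hyt) (hδout y hyt)
    _ = ENNReal.ofReal (C * γ) * ∑' y : s, volume {x ∈ sec U u G y (η * δ y) | κ * γ ≤ ‖B x‖} :=
        ENNReal.tsum_mul_left
    _ = ENNReal.ofReal (C * γ) * volume (⋃ y ∈ s, {x ∈ sec U u G y (η * δ y) | κ * γ ≤ ‖B x‖}) := by
        rw [measure_biUnion hcount (hdisj.mono fun y x hx => hx.1)
          (fun y hy => hM.measurableSet_superlevel (hopen y (hst hy)) (fun x hx => hx.1) _)]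
    _ ≤ _ := by
        gcongr
        exact iUnion₂_subset fun y hy x hx => ⟨hsmall y (hst hy) hx.1, hx.2⟩

end MALevel

/-! ### Twice continuously differentiable functions -/

namespace MALevel
open scoped RealInnerProductSpace
variable {n : ℕ}
variable {lam Lam : ℝ} {U : Set (Eucl n)} {u : Eucl n → ℝ}

/-- The gradient of `u` in coordinates. -/
noncomputable def gradVec (u : Eucl n → ℝ) (x : Eucl n) : Eucl n :=
  WithLp.toLp 2 fun i => fderiv ℝ u x (EuclideanSpace.single i 1)

/-- The Hessian of `u` as an operator; its norm is `hessNorm` by definition. -/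
noncomputable def hessOp (u : Eucl n → ℝ) (x : Eucl n) : Eucl n →L[ℝ] Eucl n :=
  Matrix.toEuclideanCLM (𝕜 := ℝ) (hessMatrix u x)

lemma sum_single (v : Eucl n) : v = ∑ i, v i • EuclideanSpace.single i (1 : ℝ) := by
  have := (EuclideanSpace.basisFun (Fin n) ℝ).sum_repr v
  simpa using this.symm

lemma inner_gradVec (x v : Eucl n) : ⟪gradVec u x, v⟫ = fderiv ℝ u x v := by
  conv_rhs => rw [sum_single v]
  simp [gradVec, PiLp.inner_apply]

lemma hasFDerivAt_of_contDiffOn (hU : IsOpen U) (h : ContDiffOn ℝ 2 u U) {x : Eucl n} (hx : x ∈ U) :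
    HasFDerivAt u (innerSL ℝ (gradVec u x)) x := by
  have h1 := ((h.contDiffAt (hU.mem_nhds hx)).differentiableAt two_ne_zero).hasFDerivAt
  have h2 : innerSL ℝ (gradVec u x) = fderiv ℝ u x := by
    ext v
    exact inner_gradVec x v
  exact h2 ▸ h1

lemma contDiffAt_fderiv (hU : IsOpen U) (h : ContDiffOn ℝ 2 u U) {x : Eucl n} (hx : x ∈ U) :
    ContDiffAt ℝ 1 (fderiv ℝ u) x :=
  (h.contDiffAt (hU.mem_nhds hx)).fderiv_right (by norm_num)

lemma hessMatrix_apply (x : Eucl n) (i j : Fin n) :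
    hessMatrix u x i j =
      fderiv ℝ (fderiv ℝ u) x (EuclideanSpace.single i 1) (EuclideanSpace.single j 1) := by
  simp [hessMatrix, iteratedFDeriv_two_apply]

lemma hess_symm (hU : IsOpen U) (h : ContDiffOn ℝ 2 u U) {x : Eucl n} (hx : x ∈ U) (v w : Eucl n) :
    fderiv ℝ (fderiv ℝ u) x v w = fderiv ℝ (fderiv ℝ u) x w v :=
  (h.contDiffAt (hU.mem_nhds hx)).isSymmSndFDerivAt (by simp) v w

/-- The operator `hessOp` represents the second Fréchet derivative. -/
lemma inner_hessOp (x a b : Eucl n) :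
    ⟪a, hessOp u x b⟫ = fderiv ℝ (fderiv ℝ u) x a b := by
  rw [hessOp, Matrix.inner_toEuclideanCLM]
  conv_rhs => rw [sum_single a, sum_single b]
  simp [dotProduct, Matrix.mulVec, hessMatrix_apply, mul_comm, Finset.mul_sum, mul_left_comm]
  rw [Finset.sum_comm]

lemma hasFDerivAt_gradVec (hU : IsOpen U) (h : ContDiffOn ℝ 2 u U) {x : Eucl n} (hx : x ∈ U) :
    HasFDerivAt (gradVec u) (hessOp u x) x := by
  rw [← hasFDerivWithinAt_univ, hasFDerivWithinAt_euclidean]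
  intro i
  rw [hasFDerivWithinAt_univ]
  have h1 := ((contDiffAt_fderiv hU h hx).differentiableAt one_ne_zero).hasFDerivAt
  have h2 := h1.clm_apply (hasFDerivAt_const (EuclideanSpace.single i (1 : ℝ)) x)
  have h3 : (EuclideanSpace.proj i : Eucl n →L[ℝ] ℝ) ∘L hessOp u x =
      fderiv ℝ u x ∘L (0 : Eucl n →L[ℝ] Eucl n) + (fderiv ℝ (fderiv ℝ u) x).flip (EuclideanSpace.single i 1) := by
    refine ContinuousLinearMap.ext fun v => ?_
    have h4 := inner_hessOp (u := u) x (EuclideanSpace.single i 1) v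
    rw [hess_symm hU h hx] at h4
    simpa [EuclideanSpace.inner_single_left] using h4
  exact h3 ▸ h2

lemma continuousOn_hessOp (hU : IsOpen U) (h : ContDiffOn ℝ 2 u U) :
    ContinuousOn (hessOp u) U := by
  have hL : Continuous (Matrix.toEuclideanCLM (n := Fin n) (𝕜 := ℝ)).toAlgEquiv.toLinearMap :=
    LinearMap.continuous_of_finiteDimensional _
  refine hL.comp_continuousOn (f := hessMatrix u) ?_
  refine continuousOn_pi.2 fun i => continuousOn_pi.2 fun j => ?_
  simp only [hessMatrix_apply]
  intro x hx
  have h1 : ContinuousAt (fderiv ℝ (fderiv ℝ u)) x :=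
    ((contDiffAt_fderiv hU h hx).fderiv_right (m := 0) (by norm_num)).continuousAt
  exact ((h1.clm_apply continuousAt_const).clm_apply continuousAt_const).continuousWithinAt

lemma tangent_le (hU : IsOpen U) (h : ContDiffOn ℝ 2 u U) (hc : ConvexOn ℝ U u)
    {x y : Eucl n} (hx : x ∈ U) (hy : y ∈ U) : u x + ⟪gradVec u x, y - x⟫ ≤ u y := by
  have h1 := hc.comp_affineMap (AffineMap.lineMap x y : ℝ →ᵃ[ℝ] Eucl n)
  have hd : HasDerivAt (u ∘ (AffineMap.lineMap x y : ℝ →ᵃ[ℝ] Eucl n)) ⟪gradVec u x, y - x⟫ 0 := by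
    have h2 : HasDerivAt (AffineMap.lineMap x y : ℝ →ᵃ[ℝ] Eucl n) (y - x) 0 :=
      AffineMap.hasDerivAt_lineMap
    have h3 : HasFDerivAt u (innerSL ℝ (gradVec u x)) ((AffineMap.lineMap x y : ℝ →ᵃ[ℝ] Eucl n) 0) := by
      simpa using hasFDerivAt_of_contDiffOn hU h hx
    exact h3.comp_hasDerivAt _ h2
  have h4 := h1.le_slope_of_hasDerivAt (x := 0) (y := 1) (by simpa using hx) (by simpa using hy)
    one_pos hd
  simp [slope] at h4
  linarith

lemma hessOp_nonneg (hU : IsOpen U) (h : ContDiffOn ℝ 2 u U) (hc : ConvexOn ℝ U u)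
    {x : Eucl n} (hx : x ∈ U) (a : Eucl n) : 0 ≤ ⟪hessOp u x a, a⟫ := by
  have hl : HasDerivAt (fun t : ℝ => x + t • a) a 0 := by
    simpa using ((hasDerivAt_id (0 : ℝ)).smul_const a).const_add x
  have h1 : HasDerivAt (fun t : ℝ => gradVec u (x + t • a)) (hessOp u x a) 0 := by
    have h2 : HasFDerivAt (gradVec u) (hessOp u x) (x + (0 : ℝ) • a) := by
      simpa using hasFDerivAt_gradVec hU h hx
    exact h2.comp_hasDerivAt (0 : ℝ) hl
  have h2 : HasDerivAt (fun t : ℝ => ⟪gradVec u (x + t • a), a⟫) ⟪hessOp u x a, a⟫ 0 := by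
    simpa using h1.inner ℝ (hasDerivAt_const (0 : ℝ) a)
  rw [hasDerivAt_iff_tendsto_slope] at h2
  refine ge_of_tendsto h2 ?_
  have hmem : ∀ᶠ t in nhds (0 : ℝ), x + t • a ∈ U :=
    hl.continuousAt.eventually_mem (hU.mem_nhds (by simpa using hx))
  filter_upwards [nhdsWithin_le_nhds hmem, self_mem_nhdsWithin] with t ht ht0
  have h3 := tangent_le hU h hc hx ht
  have h4 := tangent_le hU h hc ht hx
  have e1 : x + t • a - x = t • a := by abel
  have e2 : x - (x + t • a) = -(t • a) := by abel
  rw [e1, inner_smul_right] at h3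
  rw [e2, inner_neg_right, inner_smul_right] at h4
  have ht0 : t ≠ 0 := ht0
  have h5 : 0 ≤ t * (⟪gradVec u (x + t • a), a⟫ - ⟪gradVec u x, a⟫) := by linarith
  simp only [slope_def_field, zero_smul, add_zero, sub_zero]
  have h6 : 0 < t ^ 2 := by positivity
  rw [show (⟪gradVec u (x + t • a), a⟫ - ⟪gradVec u x, a⟫) / t =
    t * (⟪gradVec u (x + t • a), a⟫ - ⟪gradVec u x, a⟫) / t ^ 2 by field_simp]
  positivity

lemma det_hessOp (x : Eucl n) : (hessOp u x).det = hessDet u x := by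
  rw [ContinuousLinearMap.det, hessOp, Matrix.coe_toEuclideanCLM_eq_toEuclideanLin,
    Matrix.toEuclideanLin, Matrix.toLpLin_eq_toLin, LinearMap.det_toLin, hessDet]

/-- A convex function vanishing on the boundary is nonpositive: at an interior maximum the tangent
inequality makes the function constant. -/
lemma nonpos_of_convexOn (hn : 1 ≤ n) (hU : IsOpen U) (hb : Bornology.IsBounded U)
    (hcont : ContinuousOn u (closure U)) (h : ContDiffOn ℝ 2 u U) (hc : ConvexOn ℝ U u)
    (h0 : ∀ x ∈ frontier U, u x = 0) {x : Eucl n} (hx : x ∈ U) : u x ≤ 0 := by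
  have : Nonempty (Fin n) := ⟨⟨0, hn⟩⟩
  obtain ⟨z, hz, hzmax⟩ := hb.isCompact_closure.exists_isMaxOn ⟨x, subset_closure hx⟩ hcont
  refine (hzmax (subset_closure hx)).trans ?_
  by_cases hzU : z ∈ U
  · have hg : fderiv ℝ u z = 0 :=
      ((hzmax.on_subset subset_closure).isLocalMax (hU.mem_nhds hzU)).fderiv_eq_zero
    have hle : ∀ y ∈ U, u z ≤ u y := fun y hy => by
      have := tangent_le hU h hc hzU hy
      rwa [inner_gradVec, hg, zero_apply, add_zero] at this
    have hne : (frontier U).Nonempty := by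
      rw [nonempty_frontier_iff]
      refine ⟨⟨x, hx⟩, fun hu => ?_⟩
      rw [hu] at hb
      exact NormedSpace.unbounded_univ ℝ (Eucl n) hb
    obtain ⟨y, hy⟩ := hne
    rw [← h0 y hy]
    exact le_on_closure hle continuousOn_const hcont hy.1
  · exact (h0 z ⟨hz, fun hi => hzU (interior_subset hi)⟩).le

/-- A `C²` solution in the sense of the theorem, with its gradient and Hessian, is an `MADomain`. -/
lemma maDomain_of_contDiffOn (hn : 1 ≤ n) (hU : IsNormalized U)
    (hcont : ContinuousOn u (closure U)) (hc : ConvexOn ℝ U u) (h : ContDiffOn ℝ 2 u U)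
    (h0 : ∀ x ∈ frontier U, u x = 0)
    (hdet : ∀ x ∈ U, lam ≤ hessDet u x ∧ hessDet u x ≤ Lam) :
    MADomain lam Lam U u (gradVec u) (hessOp u) where
  isOpen := hU.1
  convex := hU.2.1
  bounded := isBounded_ball.subset hU.2.2.2
  cont := hcont
  bdry := h0
  nonpos x hx := nonpos_of_convexOn hn hU.1 (isBounded_ball.subset hU.2.2.2) hcont h hc h0 hx
  tangent x hx y hy := tangent_le hU.1 h hc hx hy
  grad x hx := hasFDerivAt_of_contDiffOn hU.1 h hx
  hess x hx := hasFDerivAt_gradVec hU.1 h hx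
  contB := continuousOn_hessOp hU.1 h
  symm x hx a b := by
    rw [inner_hessOp, real_inner_comm, inner_hessOp, hess_symm hU.1 h hx]
  nonneg x hx a := hessOp_nonneg hU.1 h hc hx a
  le_det x hx := by rw [det_hessOp]; exact (hdet x hx).1
  det_le x hx := by rw [det_hessOp]; exact (hdet x hx).2

end MALevel

theorem key_level_set_estimate
    (n : ℕ) (hn : 1 ≤ n) (lam Lam : ℝ) (hlam : 0 < lam) (hlL : lam ≤ Lam) :
    ∃ c' > (0 : ℝ), ∃ c'' > (0 : ℝ), ∃ cbar : ℝ, 2 ≤ cbar ∧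
      ∀ (U : Set (EuclideanSpace ℝ (Fin n))) (u : EuclideanSpace ℝ (Fin n) → ℝ),
      IsNormalized U →
      ContinuousOn u (closure U) → ConvexOn ℝ U u → ContDiffOn ℝ 2 u U →
      (∀ x ∈ frontier U, u x = 0) →
      (∀ x ∈ U, lam ≤ hessDet u x ∧ hessDet u x ≤ Lam) →
      ∀ γ : ℝ, cbar ≤ γ →
        ∫ x in ((1/2 : ℝ) • U) ∩ {x | γ ≤ hessNorm u x}, hessNorm u x ≤
          c' * γ * (volume {x ∈ (3/4 : ℝ) • U | c'' * γ ≤ hessNorm u x}).toReal := by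
  obtain ⟨C, hC, κ, hκ, cbar, hcbar, H⟩ :=
    MALevel.exists_level_set (n := n) hn hlam (hlam.trans_le hlL)
  refine ⟨C, hC, κ, hκ, cbar, hcbar, fun U u hU hcont hc h h0 hdet γ hγ => ?_⟩
  have hM := MALevel.maDomain_of_contDiffOn hn hU hcont hc h h0 hdet
  have hγ0 : 0 < γ := by linarith
  have key := H U u _ _ hM hU.2.2.1 hU.2.2.2 γ hγ
  -- the volume on the right is finite, so its real value is not a default value; the integral on the left is bounded by
  -- the lower Lebesgue integral whether or not integrability is known
  have hfin : volume {x ∈ (3/4 : ℝ) • U | κ * γ ≤ hessNorm u x} ≠ ⊤ :=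
    ((hM.bounded.smul₀ (3/4 : ℝ)).subset fun x hx => hx.1).measure_lt_top.ne
  calc ∫ x in ((1/2 : ℝ) • U) ∩ {x | γ ≤ hessNorm u x}, hessNorm u x
      ≤ ‖∫ x in ((1/2 : ℝ) • U) ∩ {x | γ ≤ hessNorm u x}, hessNorm u x‖ := le_abs_self _
    _ ≤ (∫⁻ x in ((1/2 : ℝ) • U) ∩ {x | γ ≤ hessNorm u x}, ENNReal.ofReal ‖hessNorm u x‖).toReal :=
        norm_integral_le_lintegral_norm _
    _ = (∫⁻ x in ((1/2 : ℝ) • U) ∩ {x | γ ≤ hessNorm u x}, ENNReal.ofReal (hessNorm u x)).toReal := by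
        simp only [hessNorm, norm_norm]
    _ ≤ (ENNReal.ofReal (C * γ) * volume {x ∈ (3/4 : ℝ) • U | κ * γ ≤ hessNorm u x}).toReal :=
        ENNReal.toReal_mono (ENNReal.mul_ne_top ENNReal.ofReal_ne_top hfin) key
    _ = _ := by rw [ENNReal.toReal_mul, ENNReal.toReal_ofReal (by positivity)]
end

section
/- Let n ≥ 1 and let Z ⊂ ℝⁿ be an open bounded convex set. Then there exists an invertible affine transformation T : ℝⁿ → ℝⁿ, with linear part A satisfying det A > 0, such that B(0,1) ⊆ T(Z) ⊆ B(0,n). Moreover, any such T satisfies ω_n/|Z| ≤ det A ≤ nⁿ ω_n/|Z|, where ω_n := |B(0,1)| is the volume of the unit ball. -/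
/-!
Among all affine images `A (closedBall 0 1) + c` contained in the compact convex set `closure Z`,
choose one for which `det A` is maximal (`exists_max_ellipsoid`); the inverse of `x ↦ A x + c` is
the required normalization `T`. The unit ball lies in `T Z` by construction, since an open convex
set is the interior of its closure.

The inclusion `T Z ⊆ ball 0 n` is the heart of the matter (`exists_larger_ellipsoid`): if a closed
convex set contains the closed unit ball and a point `t e` with `‖e‖ = 1` and `t > n`, it contains
an ellipsoid of larger volume, namely the one centred at `s e` with semi-axis `1 + s` along `e` and
semi-axes `b` orthogonally to `e`, where `s = c (t - 1) / 2`, `b ^ 2 = 1 - c` and `c` is small.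
The containment is checked on support functions, where it becomes the scalar inequality
`support_bound`. Composing with this ellipsoid would contradict the maximality of `det A`.

The determinant bounds follow by comparing volumes, as `T` scales volume by `det T.linear`.
-/

open MeasureTheory Metric Set
open scoped Pointwise

/-- The support function `s X + W` of the stretched ellipsoid, evaluated at a vector `v` of norm `N`
with `⟪e, v⟫ = X`, is at most that of the convex hull of the unit ball and `t e`, which is the
maximum of `N` and `t X`. -/
lemma support_bound {t c N X M W : ℝ} (ht : 1 < t) (hc0 : 0 ≤ c) (hc1 : c ≤ 1)
    (hX1 : -N ≤ X) (hX2 : X ≤ N) (hM1 : N ≤ M) (hM2 : t * X ≤ M)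
    (hW : W ^ 2 = (1 - c) * N ^ 2 + ((1 + c * (t - 1) / 2) ^ 2 - (1 - c)) * X ^ 2) :
    c * (t - 1) / 2 * X + W ≤ M := by
  set s := c * (t - 1) / 2 with hs
  have hN : 0 ≤ N := by linarith
  have hs0 : 0 ≤ s := by
    have : 0 ≤ t - 1 := by linarith
    positivity
  have hst : s ≤ t := by rw [hs]; nlinarith
  rcases le_total (t * X) N with h | h
  · have h1 : 0 ≤ N - s * X := by
      rcases le_total X 0 with h0 | h0
      · nlinarith
      · nlinarith
    have h2 : W ^ 2 ≤ (N - s * X) ^ 2 := by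
      have : (N - s * X) ^ 2 - W ^ 2 = c * ((N + X) * (N - t * X)) := by
        rw [hW, hs]; ring
      have : 0 ≤ c * ((N + X) * (N - t * X)) :=
        mul_nonneg hc0 (mul_nonneg (by linarith) (by linarith))
      linarith
    have := abs_le_of_sq_le_sq' h2 h1
    linarith [this.2]
  · have hX0 : 0 ≤ X := by
      by_contra hneg
      nlinarith
    have h1 : 0 ≤ (t - s) * X := mul_nonneg (by linarith) hX0
    have h2 : W ^ 2 ≤ ((t - s) * X) ^ 2 := by
      have : ((t - s) * X) ^ 2 - W ^ 2 = (1 - c) * ((t * X) ^ 2 - N ^ 2) := by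
        rw [hW, hs]; ring
      have : 0 ≤ (1 - c) * ((t * X) ^ 2 - N ^ 2) :=
        mul_nonneg (by linarith) (by nlinarith)
      linarith
    have := abs_le_of_sq_le_sq' h2 h1
    linarith [this.2]

/-- In dimension `m + 1`, a suitable parameter `c` makes the volume ratio `(1 + s) * b ^ m` of the
stretched ellipsoid to the unit ball larger than `1`, where `s = c * (t - 1) / 2`. -/
lemma exists_stretch {m : ℕ} {t : ℝ} (ht : (m : ℝ) + 1 < t) :
    ∃ c b : ℝ, 0 ≤ c ∧ c ≤ 1 ∧ 0 < b ∧ b ^ 2 = 1 - c ∧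
      1 < (1 + c * (t - 1) / 2) * b ^ m := by
  have hm : (0 : ℝ) ≤ m := m.cast_nonneg
  have ht0 : 0 < t := by linarith
  -- Squaring the claim and using Bernoulli's inequality, it is enough that
  -- `c * (t - 1) * m < t - (m + 1)`.
  obtain ⟨c, hc⟩ : ∃ c, c = (t - (m + 1)) / (2 * t * (m + 1)) := ⟨_, rfl⟩
  have hc' : c * (2 * t * (m + 1)) = t - (m + 1) := by
    rw [hc]; field_simp
  have hcpos : 0 < c := by
    rw [hc]; exact div_pos (by linarith) (by positivity)
  have hc1 : c < 1 := by
    rw [hc, div_lt_one (by positivity)]; nlinarith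
  have hcm : c * (t - 1) * m < t - (m + 1) := by
    rw [← hc', mul_assoc]
    exact mul_lt_mul_of_pos_left (by nlinarith) hcpos
  refine ⟨c, √(1 - c), hcpos.le, hc1.le, Real.sqrt_pos.2 (by linarith),
    Real.sq_sqrt (by linarith), ?_⟩
  have hb : √(1 - c) ^ 2 = 1 - c := Real.sq_sqrt (by linarith)
  refine lt_of_pow_lt_pow_left₀ 2 ?_ ?_
  · have : 0 ≤ t - 1 := by linarith
    positivity
  · rw [one_pow, mul_pow, ← pow_mul, mul_comm m 2, pow_mul, hb]
    have hB : 1 + (m : ℝ) * (-c) ≤ (1 - c) ^ m := by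
      have := one_add_mul_le_pow (a := -c) (by linarith) m
      rwa [← sub_eq_add_neg] at this
    have h1 : 1 + c * (t - 1) ≤ (1 + c * (t - 1) / 2) ^ 2 := by nlinarith [sq_nonneg (c * (t - 1))]
    have h2 : 0 < 1 + c * (t - 1) := by nlinarith
    calc 1 < (1 + c * (t - 1)) * (1 + m * (-c)) := by
            have : (1 + c * (t - 1)) * (1 + m * (-c)) - 1
              = c * ((t - (m + 1)) - c * (t - 1) * m) := by ring
            have : 0 < c * ((t - (m + 1)) - c * (t - 1) * m) :=
              mul_pos hcpos (by linarith)
            linarith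
      _ ≤ (1 + c * (t - 1)) * (1 - c) ^ m := mul_le_mul_of_nonneg_left hB h2.le
      _ ≤ _ := mul_le_mul_of_nonneg_right h1 (pow_nonneg (by linarith) _)

/-- The volume-increasing step: a point of norm greater than `n` lets the unit ball be replaced by
an ellipsoid of larger volume. A point of the ellipsoid outside `K` would be separated from `K` by
some `v`, contradicting `support_bound`. -/
lemma exists_larger_ellipsoid {n : ℕ} (hn : 1 ≤ n) {K : Set (EuclideanSpace ℝ (Fin n))}
    (hKc : IsClosed K) (hK : Convex ℝ K) (hball : closedBall 0 1 ⊆ K)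
    {p : EuclideanSpace ℝ (Fin n)} (hp : p ∈ K) (hpn : (n : ℝ) < ‖p‖) :
    ∃ (A : EuclideanSpace ℝ (Fin n) →ₗ[ℝ] EuclideanSpace ℝ (Fin n))
      (q : EuclideanSpace ℝ (Fin n)),
      1 < LinearMap.det A ∧ ∀ y ∈ closedBall (0 : EuclideanSpace ℝ (Fin n)) 1, A y + q ∈ K := by
  obtain ⟨m, rfl⟩ : ∃ m, n = m + 1 := ⟨n - 1, by omega⟩
  set t := ‖p‖ with ht
  have hpn' : (m : ℝ) + 1 < t := by exact_mod_cast hpn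
  have ht1 : 1 < t := by linarith [(m.cast_nonneg : (0 : ℝ) ≤ m)]
  obtain ⟨c, b, hc0, hc1, hb, hb2, hdet⟩ := exists_stretch hpn'
  set s := c * (t - 1) / 2 with hs
  set e := t⁻¹ • p with he
  have hte : t • e = p := by rw [he, smul_inv_smul₀ (by linarith)]
  have he1 : ‖e‖ = 1 := by
    rw [he, norm_smul, norm_inv, Real.norm_of_nonneg (by linarith), ← ht,
      inv_mul_cancel₀ (by linarith)]
  have hee : inner ℝ e e = (1 : ℝ) := by rw [real_inner_self_eq_norm_sq, he1]; norm_num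
  refine ⟨b • LinearMap.transvection (innerₗ _ e) (((1 + s - b) / b) • e), s • e, ?_, ?_⟩
  · rw [LinearMap.det_smul, LinearMap.transvection.det, finrank_euclideanSpace_fin]
    simp only [innerₗ_apply_apply, inner_smul_right, hee]
    convert hdet using 1
    field_simp
    ring
  · intro y hy
    by_contra hnot
    obtain ⟨f, u, hfu, hu⟩ := geometric_hahn_banach_closed_point hK hKc hnot
    obtain ⟨v, rfl⟩ := (InnerProductSpace.toDual ℝ _).surjective f
    simp only [InnerProductSpace.toDual_apply_apply] at hfu hu
    have hp1 : t * inner ℝ e v ≤ u := by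
      have := hfu p hp
      rw [← hte, inner_smul_right, real_inner_comm] at this
      exact this.le
    have hv1 : ‖v‖ ≤ u := by
      by_cases hv : v = 0
      · have := hfu 0 (hball (by simp))
        simp only [inner_zero_right] at this
        rw [hv, norm_zero]; exact this.le
      · have hv' : ‖v‖ ≠ 0 := norm_ne_zero_iff.2 hv
        have := hfu (‖v‖⁻¹ • v) (hball (by simp [norm_smul, hv']))
        rw [inner_smul_right, real_inner_self_eq_norm_sq, sq, inv_mul_cancel_left₀ hv'] at this
        exact this.le
    have hX : |inner ℝ e v| ≤ ‖v‖ := by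
      simpa [he1] using abs_real_inner_le_norm e v
    set X := inner ℝ e v with hXdef
    -- `w` is the image of `v` under the (self-adjoint) linear map defining the ellipsoid.
    obtain ⟨w, hw⟩ : ∃ w, w = b • v + ((1 + s - b) * X) • e := ⟨_, rfl⟩
    have hwn : ‖w‖ ^ 2 = (1 - c) * ‖v‖ ^ 2 + ((1 + s) ^ 2 - (1 - c)) * X ^ 2 := by
      rw [← hb2, hw, norm_add_sq_real, norm_smul, norm_smul, he1, inner_smul_left, inner_smul_right,
        real_inner_comm, ← hXdef, mul_pow, mul_pow]
      simp only [Real.norm_eq_abs, sq_abs, RCLike.conj_to_real]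
      ring
    have hvy : inner ℝ v (b • LinearMap.transvection (innerₗ _ e) (((1 + s - b) / b) • e) y + s • e)
        = s * X + inner ℝ w y := by
      rw [hw]
      simp only [LinearMap.transvection.apply, innerₗ_apply_apply, inner_add_right, inner_add_left,
        inner_smul_right, inner_smul_left, RCLike.conj_to_real, real_inner_comm e v, smul_add]
      rw [← hXdef]
      field_simp
      ring
    have hwy : inner ℝ w y ≤ ‖w‖ := by
      have h1 := real_inner_le_norm w y
      have h2 : ‖y‖ ≤ 1 := by simpa using hy
      nlinarith [norm_nonneg w]
    have : s * X + ‖w‖ ≤ u := support_bound ht1 hc0 hc1 (abs_le.1 hX).1 (abs_le.1 hX).2 hv1 hp1 hwn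
    rw [LinearMap.smul_apply, hvy] at hu
    linarith

/-- The parameters `(A, q)` of ellipsoids contained in `K` form a compact set, so the continuous
function `det A` attains its maximum. -/
lemma exists_max_ellipsoid {n : ℕ} {K : Set (EuclideanSpace ℝ (Fin n))}
    (hK : IsCompact K) (hKi : (interior K).Nonempty) :
    ∃ (A : EuclideanSpace ℝ (Fin n) →L[ℝ] EuclideanSpace ℝ (Fin n))
      (q : EuclideanSpace ℝ (Fin n)),
      0 < A.det ∧ (∀ y ∈ closedBall (0 : EuclideanSpace ℝ (Fin n)) 1, A y + q ∈ K) ∧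
      ∀ (B : EuclideanSpace ℝ (Fin n) →L[ℝ] EuclideanSpace ℝ (Fin n))
        (r : EuclideanSpace ℝ (Fin n)),
        (∀ y ∈ closedBall (0 : EuclideanSpace ℝ (Fin n)) 1, B y + r ∈ K) → B.det ≤ A.det := by
  set S : Set ((EuclideanSpace ℝ (Fin n) →L[ℝ] EuclideanSpace ℝ (Fin n)) ×
    EuclideanSpace ℝ (Fin n)) :=
    {P | ∀ y ∈ closedBall (0 : EuclideanSpace ℝ (Fin n)) 1, P.1 y + P.2 ∈ K} with hS
  have hSclosed : IsClosed S := by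
    simp only [hS, ofPred_forall]
    refine isClosed_iInter fun y => isClosed_iInter fun _ => hK.isClosed.preimage ?_
    fun_prop
  obtain ⟨R, hR⟩ := hK.isBounded.exists_norm_le
  have hSbdd : Bornology.IsBounded S := by
    refine (isBounded_iff_forall_norm_le.2 ⟨2 * R, fun P hP => ?_⟩)
    have h0 : ‖P.2‖ ≤ R := by simpa using hR _ (hP 0 (by simp))
    have hR0 : 0 ≤ R := (norm_nonneg _).trans h0
    refine max_le (ContinuousLinearMap.opNorm_le_of_unit_norm (by linarith) fun y hy => ?_)
      (by linarith)
    have h1 := hR _ (hP y (by simp [hy]))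
    calc ‖P.1 y‖ = ‖(P.1 y + P.2) - P.2‖ := by rw [add_sub_cancel_right]
      _ ≤ _ := norm_sub_le _ _
      _ ≤ 2 * R := by linarith
  have hScomp : IsCompact S := isCompact_of_isClosed_isBounded hSclosed hSbdd
  -- A small ball inside `K` shows that the maximum of the determinant is positive.
  obtain ⟨z, hz⟩ := hKi
  obtain ⟨ε, hε, hεK⟩ := nhds_basis_closedBall.mem_iff.1 (mem_interior_iff_mem_nhds.1 hz)
  have hP0 : ((ε • ContinuousLinearMap.id ℝ _, z) : _ × _) ∈ S := by
    intro y hy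
    apply hεK
    have : ‖y‖ ≤ 1 := by simpa using hy
    simp only [_root_.smul_apply, ContinuousLinearMap.id_apply, mem_closedBall,
      dist_eq_norm, add_sub_cancel_right, norm_smul, Real.norm_of_nonneg hε.le]
    nlinarith
  obtain ⟨P, hPS, hPmax⟩ := hScomp.exists_isMaxOn ⟨_, hP0⟩
    (f := fun P => P.1.det) (ContinuousLinearMap.continuous_det.comp continuous_fst).continuousOn
  refine ⟨P.1, P.2, lt_of_lt_of_le ?_ (hPmax hP0), hPS, fun B r hB => hPmax (a := (B, r)) hB⟩
  simp only [ContinuousLinearMap.det, ContinuousLinearMap.toLinearMap_smul,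
    ContinuousLinearMap.coe_id, LinearMap.det_smul, LinearMap.det_id, mul_one]
  positivity

lemma volume_image_affine {n : ℕ} (T : EuclideanSpace ℝ (Fin n) →ᵃ[ℝ] EuclideanSpace ℝ (Fin n))
    (hT : 0 < LinearMap.det T.linear) (Z : Set (EuclideanSpace ℝ (Fin n))) :
    (volume (T '' Z)).toReal = LinearMap.det T.linear * (volume Z).toReal := by
  have h : T '' Z = (fun y => y + T 0) '' (T.linear '' Z) := by
    rw [image_image]
    refine image_congr fun x _ => ?_
    exact congrFun T.decomp x
  rw [h, image_add_right, measure_preimage_add_right, Measure.addHaar_image_linearMap,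
    ENNReal.toReal_mul, abs_of_pos hT, ENNReal.toReal_ofReal hT.le]

theorem johns_lemma (n : ℕ) (hn : 1 ≤ n) (Z : Set (EuclideanSpace ℝ (Fin n)))
    (hZopen : IsOpen Z) (hZbdd : Bornology.IsBounded Z) (hZconv : Convex ℝ Z)
    (hZne : Z.Nonempty) :
    (∃ T : EuclideanSpace ℝ (Fin n) →ᵃ[ℝ] EuclideanSpace ℝ (Fin n),
      Function.Bijective T ∧ 0 < LinearMap.det T.linear ∧
      ball (0 : EuclideanSpace ℝ (Fin n)) 1 ⊆ T '' Z ∧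
      T '' Z ⊆ ball (0 : EuclideanSpace ℝ (Fin n)) n) ∧
    ∀ T : EuclideanSpace ℝ (Fin n) →ᵃ[ℝ] EuclideanSpace ℝ (Fin n),
      Function.Bijective T → 0 < LinearMap.det T.linear →
      ball (0 : EuclideanSpace ℝ (Fin n)) 1 ⊆ T '' Z →
      T '' Z ⊆ ball (0 : EuclideanSpace ℝ (Fin n)) n →
      (volume (ball (0 : EuclideanSpace ℝ (Fin n)) 1)).toReal / (volume Z).toReal ≤
          LinearMap.det T.linear ∧
        LinearMap.det T.linear ≤
          (n : ℝ) ^ n * (volume (ball (0 : EuclideanSpace ℝ (Fin n)) 1)).toReal /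
            (volume Z).toReal := by
  have hn0 : (n : ℝ) ≠ 0 := by exact_mod_cast (by omega : n ≠ 0)
  constructor
  · have hint : interior (closure Z) = Z := by
      rw [hZconv.interior_closure_eq_interior_of_nonempty_interior (by rwa [hZopen.interior_eq]),
        hZopen.interior_eq]
    obtain ⟨A, q, hdet, hA, hmax⟩ := exists_max_ellipsoid hZbdd.isCompact_closure
      (by rwa [hint])
    let L : EuclideanSpace ℝ (Fin n) ≃ₗ[ℝ] EuclideanSpace ℝ (Fin n) :=
      LinearMap.equivOfDetNeZero (A : _ →ₗ[ℝ] _) hdet.ne'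
    have hL : ∀ x, L x = A x := fun x => rfl
    let F : EuclideanSpace ℝ (Fin n) ≃ₜ EuclideanSpace ℝ (Fin n) :=
      L.toContinuousLinearEquiv.toHomeomorph.trans (Homeomorph.addRight q)
    have hF : ∀ x, F x = A x + q := fun x => rfl
    let T : EuclideanSpace ℝ (Fin n) ≃ᵃ[ℝ] EuclideanSpace ℝ (Fin n) :=
      (L.toAffineEquiv.trans (AffineEquiv.vaddConst ℝ q)).symm
    have hTF : ∀ x, T.symm x = F x := fun x => rfl
    have himg : T.toAffineMap '' Z = F ⁻¹' Z := by
      ext x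
      constructor
      · rintro ⟨z, hz, rfl⟩
        change F (T z) ∈ Z
        rw [← hTF, T.symm_apply_apply]; exact hz
      · intro hx
        refine ⟨F x, hx, ?_⟩
        rw [← hTF]; exact T.apply_symm_apply x
    have hTdet : LinearMap.det T.toAffineMap.linear = (A.det)⁻¹ := by
      change LinearMap.det (L.symm : EuclideanSpace ℝ (Fin n) →ₗ[ℝ] EuclideanSpace ℝ (Fin n)) = _
      exact LinearEquiv.det_coe_symm L
    have hball : ball 0 1 ⊆ F ⁻¹' Z := by
      conv_rhs => rw [← hint]
      rw [F.preimage_interior]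
      exact interior_maximal (fun y hy => hA y (ball_subset_closedBall hy)) isOpen_ball
    refine ⟨T.toAffineMap, T.bijective, ?_, ?_, ?_⟩
    · rw [hTdet]; exact inv_pos.2 hdet
    · rw [himg]; exact hball
    · rw [himg, ← interior_closedBall _ hn0]
      refine interior_maximal (fun p hp => ?_) (hZopen.preimage F.continuous)
      rw [mem_closedBall_zero_iff]
      by_contra! hpn
      have hKconv : Convex ℝ (F ⁻¹' closure Z) :=
        hZconv.closure.affine_preimage T.symm.toAffineMap
      obtain ⟨B, r, hB, hBK⟩ := exists_larger_ellipsoid hn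
        (isClosed_closure.preimage F.continuous) hKconv hA
        (subset_closure hp) hpn
      have hle := hmax (A.comp (LinearMap.toContinuousLinearMap B)) (A r + q) (fun y hy => by
        have h := hBK y hy
        rw [mem_preimage, hF, map_add, add_assoc] at h
        exact h)
      have hcomp : (A.comp (LinearMap.toContinuousLinearMap B)).det = A.det * LinearMap.det B :=
        LinearMap.det_comp _ _
      rw [hcomp] at hle
      nlinarith
  · intro T _ hdet h1 h2
    have hvol := volume_image_affine T hdet Z
    have hZpos : 0 < (volume Z).toReal :=
      ENNReal.toReal_pos (hZopen.measure_pos volume hZne).ne' hZbdd.measure_lt_top.ne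
    have hballn : (volume (ball (0 : EuclideanSpace ℝ (Fin n)) n)).toReal =
        (n : ℝ) ^ n * (volume (ball (0 : EuclideanSpace ℝ (Fin n)) 1)).toReal := by
      rw [Measure.addHaar_ball_of_pos volume 0 (by positivity), finrank_euclideanSpace_fin,
        ENNReal.toReal_mul, ENNReal.toReal_ofReal (by positivity)]
    have hfin : volume (T '' Z) ≠ ⊤ := ((measure_mono h2).trans_lt measure_ball_lt_top).ne
    rw [div_le_iff₀ hZpos, le_div_iff₀ hZpos, ← hvol, ← hballn]
    exact ⟨ENNReal.toReal_mono hfin (measure_mono h1),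
      ENNReal.toReal_mono measure_ball_lt_top.ne (measure_mono h2)⟩
end
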